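/- Let u be a bounded classical solution of the localized fractional heat equation. Then for every integer k ≥ 1 there is a constant C_k, depending only on k, s and n, such that: for every (t,x,y) ∈ [−1/2,0] × (B_{1/2}^+ ∪ B_{1/2}^0) the map x' ↦ u(t,x',y) is k times continuously differentiable in a neighborhood of x with ‖D_x^k u(t,x,y)‖ ≤ C_k · sup_{[−1,0]×B_1^+} |u|; moreover, for every x ∈ B_{1/2}^0 the map t ↦ D_x^k u(t,x,0) is differentiable on [−1/2,0] with ‖∂_t D_x^k u(t,x,0)‖ ≤ C_k · sup_{[−1,0]×B_1^+} |u|. -/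

import Mathlib

open Set Filter Topology MeasureTheory
open scoped RealInnerProductSpace

noncomputable section

abbrev En (n : ℕ) := EuclideanSpace ℝ (Fin n)

/-- The open upper half ball `B_r^+`. -/
def halfBall (n : ℕ) (r : ℝ) : Set (En n × ℝ) :=
  {p | ‖p.1‖ ^ 2 + p.2 ^ 2 < r ^ 2 ∧ 0 < p.2}

/-- The closure of the upper half ball. -/
def closedHalfBall (n : ℕ) (r : ℝ) : Set (En n × ℝ) :=
  {p | ‖p.1‖ ^ 2 + p.2 ^ 2 ≤ r ^ 2 ∧ 0 ≤ p.2}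

/-- `B_r^+ ∪ B_r^0`. -/
def halfBallWithBase (n : ℕ) (r : ℝ) : Set (En n × ℝ) :=
  {p | ‖p.1‖ ^ 2 + p.2 ^ 2 < r ^ 2 ∧ 0 ≤ p.2}

/-- The flat ball `B_r^0` in `ℝⁿ`. -/
def flatBall (n : ℕ) (r : ℝ) : Set (En n) := {x | ‖x‖ < r}

/-- `(∂B_1)^+`. -/
def spherePlus (n : ℕ) : Set (En n × ℝ) := {p | ‖p.1‖ ^ 2 + p.2 ^ 2 = 1 ∧ 0 < p.2}

/-- closure of `(∂B_1)^+`. -/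
def closedSpherePlus (n : ℕ) : Set (En n × ℝ) := {p | ‖p.1‖ ^ 2 + p.2 ^ 2 = 1 ∧ 0 ≤ p.2}

/-- Second directional derivative of `u` at `p` in direction `v`. -/
def D2 {n : ℕ} (u : En n × ℝ → ℝ) (p v : En n × ℝ) : ℝ :=
  fderiv ℝ (fun q => fderiv ℝ u q v) p v

/-- The Laplacian in the `n+1` variables `(x, y)`. -/
def lap {n : ℕ} (u : En n × ℝ → ℝ) (p : En n × ℝ) : ℝ :=
  (∑ i : Fin n, D2 u p (EuclideanSpace.single i 1, 0)) + D2 u p (0, 1)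

/-- `u` is `a`-harmonic on `Ω`: it is `C²` there and `Δu + (a/y) ∂_y u = 0`. -/
def IsAHarmonicOn {n : ℕ} (a : ℝ) (u : En n × ℝ → ℝ) (Ω : Set (En n × ℝ)) : Prop :=
  ContDiffOn ℝ 2 u Ω ∧ ∀ p ∈ Ω, lap u p + (a / p.2) * fderiv ℝ u p (0, 1) = 0

/-- `lim_{y → 0⁺} y^a ∂_y w(x, y) = L`. -/
def NormalDerivLimit {n : ℕ} (a : ℝ) (w : En n × ℝ → ℝ) (x : En n) (L : ℝ) : Prop :=
  Tendsto (fun y : ℝ => y ^ a * fderiv ℝ w (x, y) (0, 1)) (𝓝[>] (0 : ℝ)) (𝓝 L)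

/-- The boundary-restriction `(t, x) ↦ u(t, x, 0)`. -/
def bdryFun {n : ℕ} (u : ℝ → En n × ℝ → ℝ) : ℝ × En n → ℝ := fun q => u q.1 (q.2, 0)

/-- A classical solution of the extended drift–diffusion equation on
`[-1,0] × closure (B_1^+)` with drift `b` and right-hand side `f`. -/
def IsExtDDSolution {n : ℕ} (a : ℝ) (b : ℝ → En n → En n) (f : ℝ → En n → ℝ)
    (u : ℝ → En n × ℝ → ℝ) : Prop :=
  ContinuousOn (fun q : ℝ × (En n × ℝ) => u q.1 q.2) (Icc (-1 : ℝ) 0 ×ˢ closedHalfBall n 1) ∧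
  (∀ t ∈ Icc (-1 : ℝ) 0, IsAHarmonicOn a (u t) (halfBall n 1)) ∧
  (∀ q ∈ Ioc (-1 : ℝ) 0 ×ˢ flatBall n 1,
      DifferentiableWithinAt ℝ (bdryFun u) (Ioc (-1 : ℝ) 0 ×ˢ flatBall n 1) q) ∧
  (∀ t x, (t, x) ∈ Ioc (-1 : ℝ) 0 ×ˢ flatBall n 1 →
      ∃ L : ℝ, NormalDerivLimit a (u t) x L ∧
        fderivWithin ℝ (bdryFun u) (Ioc (-1 : ℝ) 0 ×ˢ flatBall n 1) (t, x) (1, 0) +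
          fderivWithin ℝ (bdryFun u) (Ioc (-1 : ℝ) 0 ×ˢ flatBall n 1) (t, x) (0, b t x) -
          L = f t x)

/-- A classical solution of the localized fractional heat equation on
`[-1,0] × closure (B_1^+)`. -/
def IsFracHeatSolution {n : ℕ} (a : ℝ) (u : ℝ → En n × ℝ → ℝ) : Prop :=
  ContinuousOn (fun q : ℝ × (En n × ℝ) => u q.1 q.2) (Icc (-1 : ℝ) 0 ×ˢ closedHalfBall n 1) ∧
  (∀ t ∈ Icc (-1 : ℝ) 0, IsAHarmonicOn a (u t) (halfBall n 1)) ∧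
  (∀ t ∈ Ioc (-1 : ℝ) 0, ∀ x ∈ flatBall n 1,
      DifferentiableWithinAt ℝ (fun τ => u τ (x, 0)) (Ioc (-1 : ℝ) 0) t ∧
      NormalDerivLimit a (u t) x (derivWithin (fun τ => u τ (x, 0)) (Ioc (-1 : ℝ) 0) t))

/-!
The equation is invariant under horizontal isometries, so the difference of a solution and its
reflection in a vertical hyperplane is again a solution, odd across that hyperplane. Such a
difference lies below an explicit barrier, a regularization of `X / √(X² + y²)` by a parameter
`θ(t)` that solves an ODE making the barrier a strict supersolution. The barrier grows at most
linearly in the distance to the hyperplane, which gives a Lipschitz bound in `x`.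

Hence difference quotients in `x` of bounded solutions are bounded solutions on smaller cylinders.
By iteration, difference quotients of every order are bounded, which makes `u` smooth in `x` with
bounded derivatives. In particular `Δ_x u` is bounded, and `∂_y (y^a ∂_y u) = -y^a Δ_x u` bounds
`∂_t u = lim_{y → 0⁺} y^a ∂_y u` on the base. The same holds for the difference quotients of `u`,
so those of the time slopes of `u` are bounded too, and the `x`-derivatives of the slopes converge.
-/

section DifferenceQuotients

-- `E` and `F` share a universe because inductions on the order replace `F` by `E →L[ℝ] F`.
universe u

variable {E F : Type u} [NormedAddCommGroup E] [NormedAddCommGroup F] [NormedSpace ℝ F]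

/-- The difference quotient of `f` along `v`, normalised by `‖v‖`; it is `0` for `v = 0`. -/
def diffQuot (v : E) (f : E → F) (z : E) : F := ‖v‖⁻¹ • (f (z + v) - f z)

/-- All iterated difference quotients of order `m` of `f` are bounded by `K` in the ball of radius
`r` about the origin. Each increment `v` costs `‖v‖` of the radius, so that only values of `f` in
the original ball enter. -/
def DiffQuotBound : ℕ → ℝ → ℝ → (E → F) → Prop
  | 0, K, r, f => ∀ z, ‖z‖ < r → ‖f z‖ ≤ K
  | m + 1, K, r, f => ∀ v, DiffQuotBound m K (r - ‖v‖) (diffQuot v f)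

lemma norm_add_lt_of_lt_sub_norm {z v : E} {r : ℝ} (hz : ‖z‖ < r - ‖v‖) : ‖z + v‖ < r := by
  linarith [norm_add_le z v]

lemma norm_sub_le_of_norm_diffQuot_le {f : E → F} {z v : E} {K : ℝ}
    (h : ‖diffQuot v f z‖ ≤ K) : ‖f (z + v) - f z‖ ≤ K * ‖v‖ := by
  rcases eq_or_ne v 0 with rfl | hv
  · simp
  · rwa [diffQuot, norm_smul, norm_inv, norm_norm, inv_mul_le_iff₀ (norm_pos_iff.2 hv),
      mul_comm] at h

lemma norm_diffQuot_le {f : E → F} {z v : E} {K : ℝ} (hK : 0 ≤ K)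
    (h : ‖f (z + v) - f z‖ ≤ K * ‖v‖) : ‖diffQuot v f z‖ ≤ K := by
  rw [diffQuot, norm_smul, norm_inv, norm_norm, mul_comm, ← div_eq_mul_inv]
  exact div_le_of_le_mul₀ (norm_nonneg v) hK h

namespace DiffQuotBound

variable {m : ℕ} {K K' r r' : ℝ} {f g : E → F}

lemma of_radius_nonpos (hr : r ≤ 0) : DiffQuotBound m K r f := by
  induction m generalizing r f with
  | zero => exact fun z hz => absurd (norm_nonneg z) (by linarith)
  | succ _ ih => exact fun v => ih (by linarith [norm_nonneg v])

lemma nonneg (hf : DiffQuotBound m K r f) (hr : 0 < r) : 0 ≤ K := by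
  induction m generalizing f with
  | zero => exact (norm_nonneg _).trans (hf 0 (by rwa [norm_zero]))
  | succ m ih => exact ih (f := diffQuot 0 f) (by simpa using hf 0)

lemma mono (hf : DiffQuotBound m K r f) (hK : K ≤ K') (hr : r' ≤ r) :
    DiffQuotBound m K' r' f := by
  induction m generalizing r r' f with
  | zero => exact fun z hz => (hf z (hz.trans_le hr)).trans hK
  | succ m ih => exact fun v => ih (hf v) (by linarith)

lemma of_forall_lt (hf : ∀ r' < r, DiffQuotBound m K r' f) : DiffQuotBound m K r f := by
  induction m generalizing r f with
  | zero =>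
    intro z hz
    obtain ⟨r', hzr', hr'⟩ := exists_between hz
    exact hf r' hr' z hzr'
  | succ m ih =>
    intro v
    refine ih fun r' hr' => ?_
    simpa using hf (r' + ‖v‖) (by linarith) v

lemma sub (hf : DiffQuotBound m K r f) (hg : DiffQuotBound m K' r g) :
    DiffQuotBound m (K + K') r (fun z => f z - g z) := by
  induction m generalizing r f g with
  | zero => exact fun z hz => (norm_sub_le _ _).trans (add_le_add (hf z hz) (hg z hz))
  | succ m ih =>
    intro v
    convert ih (hf v) (hg v) using 1
    funext z
    simp only [diffQuot, ← smul_sub, sub_sub_sub_comm]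

lemma of_tendsto {ι : Type*} {l : Filter ι} [l.NeBot] {G : ι → E → F}
    (hG : ∀ᶠ j in l, DiffQuotBound m K r (G j))
    (hlim : ∀ z, ‖z‖ < r → Tendsto (G · z) l (𝓝 (f z))) : DiffQuotBound m K r f := by
  induction m generalizing r G f with
  | zero => exact fun z hz => le_of_tendsto (hlim z hz).norm (hG.mono fun j hj => hj z hz)
  | succ m ih =>
    intro v
    refine ih (hG.mono fun j hj => hj v) fun z hz => ?_
    have hz' : ‖z‖ < r := by linarith [norm_nonneg v]
    exact ((hlim _ (norm_add_lt_of_lt_sub_norm hz)).sub (hlim z hz')).const_smul _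

lemma of_hasDerivWithinAt {v : ℝ → E → F} {g : E → F} {I : Set ℝ} {t : ℝ} (ht : AccPt t (𝓟 I))
    (hslope : ∀ τ ∈ I, τ ≠ t → DiffQuotBound m K r (fun z => (τ - t)⁻¹ • (v τ z - v t z)))
    (hderiv : ∀ z, ‖z‖ < r → HasDerivWithinAt (fun τ => v τ z) (g z) I t) :
    DiffQuotBound m K r g := by
  have : (𝓝[I \ {t}] t).NeBot := accPt_principal_iff_nhdsWithin.1 ht
  refine of_tendsto (l := 𝓝[I \ {t}] t) ?_
    fun z hz => hasDerivWithinAt_iff_tendsto_slope.1 (hderiv z hz)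
  filter_upwards [self_mem_nhdsWithin] with τ hτ
  exact hslope τ hτ.1 hτ.2

lemma of_forall_apply [NormedSpace ℝ E] {A : E → E →L[ℝ] F} (hK : 0 ≤ K)
    (hA : ∀ w, ‖w‖ = 1 → DiffQuotBound m K r (fun z => A z w)) : DiffQuotBound m K r A := by
  induction m generalizing r A with
  | zero =>
    exact fun z hz => ContinuousLinearMap.opNorm_le_of_unit_norm hK fun w hw => hA w hw z hz
  | succ m ih => exact fun v => ih fun w hw => hA w hw v

lemma norm_sub_le (hf : DiffQuotBound 1 K r f) {z v : E} (hz : ‖z‖ + ‖v‖ < r) :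
    ‖f (z + v) - f z‖ ≤ K * ‖v‖ :=
  norm_sub_le_of_norm_diffQuot_le (hf v z (by linarith))

lemma norm_second_diff_le (hf : DiffQuotBound 2 K r f) {z v w : E} (hz : ‖z‖ + ‖v‖ + ‖w‖ < r) :
    ‖f (z + v + w) - f (z + v) - (f (z + w) - f z)‖ ≤ K * ‖v‖ * ‖w‖ := by
  have h : ‖diffQuot w f (z + v) - diffQuot w f z‖ ≤ K * ‖v‖ :=
    norm_sub_le (hf w) (by linarith)
  rw [diffQuot, diffQuot, ← smul_sub] at h
  refine norm_sub_le_of_norm_diffQuot_le (f := fun y => f (y + v) - f y) (z := z) ?_ |>.trans_eq'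
    (by rw [add_right_comm, sub_sub_sub_comm])
  rwa [diffQuot, sub_sub_sub_comm, add_right_comm]

end DiffQuotBound

variable [NormedSpace ℝ E]

lemma norm_inv_two_pow_smul (k : ℕ) (w : E) :
    ‖((2 : ℝ) ^ k)⁻¹ • w‖ = ((2 : ℝ) ^ k)⁻¹ * ‖w‖ := by
  rw [norm_smul, Real.norm_of_nonneg (by positivity)]

lemma dist_dyadic_rescaling_succ_le {g : E → F} {ρ K : ℝ}
    (hadd : ∀ v w, ‖v‖ + ‖w‖ < ρ → ‖g (v + w) - g v - g w‖ ≤ K * ‖v‖ * ‖w‖) {w : E}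
    (hw : ‖w‖ < ρ) (k : ℕ) :
    dist ((2 : ℝ) ^ k • g (((2 : ℝ) ^ k)⁻¹ • w))
      ((2 : ℝ) ^ (k + 1) • g (((2 : ℝ) ^ (k + 1))⁻¹ • w)) ≤ K * ‖w‖ ^ 2 / 4 * (1 / 2) ^ k := by
  set v : E := ((2 : ℝ) ^ (k + 1))⁻¹ • w with hv
  have hvv : ((2 : ℝ) ^ k)⁻¹ • w = v + v := by
    rw [← two_smul ℝ v, hv, smul_smul, pow_succ]
    congr 1
    field_simp
  have hvn : ‖v‖ = ((2 : ℝ) ^ (k + 1))⁻¹ * ‖w‖ := norm_inv_two_pow_smul (k + 1) w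
  have hvρ : ‖v‖ + ‖v‖ < ρ := by
    refine lt_of_le_of_lt ?_ hw
    have : ((2 : ℝ) ^ (k + 1))⁻¹ ≤ 2⁻¹ :=
      inv_anti₀ two_pos (le_self_pow₀ one_le_two (Nat.succ_ne_zero k))
    rw [hvn]
    nlinarith [norm_nonneg w]
  have hdiff : (2 : ℝ) ^ k • g (v + v) - (2 : ℝ) ^ (k + 1) • g v =
      (2 : ℝ) ^ k • (g (v + v) - g v - g v) := by
    simp only [pow_succ, mul_smul, two_smul, smul_sub, smul_add]
    abel
  rw [hvv, dist_eq_norm, hdiff, norm_smul, Real.norm_of_nonneg (by positivity)]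
  calc (2 : ℝ) ^ k * ‖g (v + v) - g v - g v‖ ≤ 2 ^ k * (K * ‖v‖ * ‖v‖) := by
        gcongr
        exact hadd v v hvρ
    _ = K * ‖w‖ ^ 2 / 4 * (1 / 2) ^ k := by
        rw [hvn, pow_succ, one_div, inv_pow]
        field_simp
        ring

lemma exists_tendsto_dyadic_rescaling_of_small [CompleteSpace F] {g : E → F} {ρ K : ℝ}
    (hadd : ∀ v w, ‖v‖ + ‖w‖ < ρ → ‖g (v + w) - g v - g w‖ ≤ K * ‖v‖ * ‖w‖) {w : E}
    (hw : ‖w‖ < ρ) :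
    ∃ ℓ, Tendsto (fun k : ℕ => (2 : ℝ) ^ k • g (((2 : ℝ) ^ k)⁻¹ • w)) atTop (𝓝 ℓ) ∧
      ‖g w - ℓ‖ ≤ K / 2 * ‖w‖ ^ 2 := by
  have hstep := dist_dyadic_rescaling_succ_le hadd hw
  obtain ⟨ℓ, hℓ⟩ := cauchySeq_tendsto_of_complete
    (cauchySeq_of_le_geometric (1 / 2) _ (by norm_num) hstep)
  refine ⟨ℓ, hℓ, ?_⟩
  have hdist := dist_le_of_le_geometric_of_tendsto₀ (1 / 2) _ (by norm_num) hstep hℓ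
  rw [dist_eq_norm] at hdist
  simp only [pow_zero, inv_one, one_smul] at hdist
  exact hdist.trans_eq (by ring)

lemma exists_tendsto_dyadic_rescaling [CompleteSpace F] {g : E → F} {ρ K : ℝ} (hρ : 0 < ρ)
    (hadd : ∀ v w, ‖v‖ + ‖w‖ < ρ → ‖g (v + w) - g v - g w‖ ≤ K * ‖v‖ * ‖w‖) (w : E) :
    ∃ ℓ, Tendsto (fun k : ℕ => (2 : ℝ) ^ k • g (((2 : ℝ) ^ k)⁻¹ • w)) atTop (𝓝 ℓ) := by
  obtain ⟨j, hj⟩ := pow_unbounded_of_one_lt (‖w‖ / ρ) one_lt_two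
  have hsmall : ‖((2 : ℝ) ^ j)⁻¹ • w‖ < ρ := by
    rw [norm_inv_two_pow_smul, inv_mul_lt_iff₀ (by positivity)]
    rwa [div_lt_iff₀ hρ] at hj
  obtain ⟨ℓ, hℓ, -⟩ := exists_tendsto_dyadic_rescaling_of_small hadd hsmall
  refine ⟨(2 : ℝ) ^ j • ℓ, (tendsto_add_atTop_iff_nat j).1 ?_⟩
  refine (hℓ.const_smul ((2 : ℝ) ^ j)).congr fun k => ?_
  rw [smul_smul, smul_smul, ← mul_inv, ← pow_add, ← pow_add, add_comm j k]

lemma tendsto_inv_two_pow_mul (x : ℝ) :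
    Tendsto (fun k : ℕ => ((2 : ℝ) ^ k)⁻¹ * x) atTop (𝓝 0) := by
  simpa using (tendsto_pow_atTop_atTop_of_one_lt one_lt_two).inv_tendsto_atTop.mul_const x

lemma dyadic_rescaling_limit_add {g : E → F} {ρ K : ℝ} (hρ : 0 < ρ)
    (hadd : ∀ v w, ‖v‖ + ‖w‖ < ρ → ‖g (v + w) - g v - g w‖ ≤ K * ‖v‖ * ‖w‖) {L : E → F}
    (hL : ∀ w, Tendsto (fun k : ℕ => (2 : ℝ) ^ k • g (((2 : ℝ) ^ k)⁻¹ • w)) atTop (𝓝 (L w)))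
    (v w : E) : L (v + w) = L v + L w := by
  rw [← sub_eq_zero, ← sub_sub]
  refine tendsto_nhds_unique (((hL (v + w)).sub (hL v)).sub (hL w)) ?_
  refine squeeze_zero_norm' ?_ (tendsto_inv_two_pow_mul (K * ‖v‖ * ‖w‖))
  filter_upwards [(tendsto_inv_two_pow_mul (‖v‖ + ‖w‖)).eventually_lt_const hρ] with k hk
  have hkadd := hadd (((2 : ℝ) ^ k)⁻¹ • v) (((2 : ℝ) ^ k)⁻¹ • w) (by
    rwa [norm_inv_two_pow_smul, norm_inv_two_pow_smul, ← mul_add])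
  rw [← smul_add, norm_inv_two_pow_smul, norm_inv_two_pow_smul] at hkadd
  rw [← smul_sub, ← smul_sub, norm_smul, Real.norm_of_nonneg (by positivity)]
  refine (mul_le_mul_of_nonneg_left hkadd (by positivity)).trans_eq ?_
  field_simp

lemma exists_clm_norm_sub_le_of_almost_additive [CompleteSpace F] {g : E → F} {ρ C K : ℝ}
    (hρ : 0 < ρ) (hg : ∀ v, ‖v‖ < ρ → ‖g v‖ ≤ C * ‖v‖)
    (hadd : ∀ v w, ‖v‖ + ‖w‖ < ρ → ‖g (v + w) - g v - g w‖ ≤ K * ‖v‖ * ‖w‖) :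
    ∃ L : E →L[ℝ] F, ∀ w, ‖w‖ < ρ → ‖g w - L w‖ ≤ K / 2 * ‖w‖ ^ 2 := by
  choose L hL using exists_tendsto_dyadic_rescaling hρ hadd
  have hLbound : ∀ w, ‖L w‖ ≤ C * ‖w‖ := by
    intro w
    refine le_of_tendsto (hL w).norm ?_
    filter_upwards [(tendsto_inv_two_pow_mul ‖w‖).eventually_lt_const hρ] with k hk
    have hgk := hg (((2 : ℝ) ^ k)⁻¹ • w) (by rwa [norm_inv_two_pow_smul])
    rw [norm_inv_two_pow_smul] at hgk
    rw [norm_smul, Real.norm_of_nonneg (by positivity)]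
    refine (mul_le_mul_of_nonneg_left hgk (by positivity)).trans_eq ?_
    field_simp
  let A : E →+ F := AddMonoidHom.mk' L (dyadic_rescaling_limit_add hρ hadd hL)
  refine ⟨A.toRealLinearMap (AddMonoidHomClass.continuous_of_bound A C hLbound), fun w hw => ?_⟩
  obtain ⟨ℓ, hℓ, hwℓ⟩ := exists_tendsto_dyadic_rescaling_of_small hadd hw
  rwa [tendsto_nhds_unique hℓ (hL w)] at hwℓ

lemma tendsto_clm_iff_forall_apply [FiniteDimensional ℝ E] {ι : Type*} {l : Filter ι}
    {A : ι → E →L[ℝ] F} {L : E →L[ℝ] F} :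
    Tendsto A l (𝓝 L) ↔ ∀ w, Tendsto (A · w) l (𝓝 (L w)) := by
  refine ⟨fun h w => ((ContinuousLinearMap.apply ℝ F w).continuous.tendsto L).comp h,
    fun h => ?_⟩
  let e : (E →L[ℝ] F) ≃L[ℝ] Fin (Module.finrank ℝ E) → F :=
    ((ContinuousLinearEquiv.ofFinrankEq (Module.finrank_fin_fun ℝ).symm).arrowCongr
      (1 : F ≃L[ℝ] F)).trans (ContinuousLinearEquiv.piRing _)
  rw [e.toHomeomorph.isInducing.tendsto_nhds_iff]
  exact tendsto_pi_nhds.2 fun i => h _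

lemma hasFDerivAt_of_norm_sub_le_sq {f : E → F} {z : E} {L : E →L[ℝ] F} {ρ C : ℝ} (hρ : 0 < ρ)
    (h : ∀ v, ‖v‖ < ρ → ‖f (z + v) - f z - L v‖ ≤ C * ‖v‖ ^ 2) : HasFDerivAt f L z := by
  rw [hasFDerivAt_iff_isLittleO_nhds_zero]
  refine Asymptotics.IsBigO.trans_isLittleO (g := fun v : E => ‖v‖ ^ 2) ?_
    (Asymptotics.isLittleO_norm_pow_id one_lt_two)
  refine Asymptotics.IsBigO.of_bound C ?_
  filter_upwards [Metric.ball_mem_nhds (0 : E) hρ] with v hv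
  rw [norm_pow, norm_norm]
  exact h v (mem_ball_zero_iff.1 hv)

namespace DiffQuotBound

variable [CompleteSpace F] {m : ℕ} {K K₁ K₂ r : ℝ} {f g : E → F} {z : E}

lemma exists_norm_sub_clm_le (h₁ : DiffQuotBound 1 K₁ r f) (h₂ : DiffQuotBound 2 K₂ r f)
    (hz : ‖z‖ < r) :
    ∃ L : E →L[ℝ] F, ∀ v, ‖z‖ + ‖v‖ < r → ‖f (z + v) - f z - L v‖ ≤ K₂ / 2 * ‖v‖ ^ 2 := by
  obtain ⟨L, hL⟩ := exists_clm_norm_sub_le_of_almost_additive (g := fun v => f (z + v) - f z)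
    (sub_pos.2 hz) (fun v hv => h₁.norm_sub_le (lt_sub_iff_add_lt'.1 hv)) fun v w hvw => by
      convert h₂.norm_second_diff_le (z := z) (v := v) (w := w) (by linarith) using 2
      rw [add_assoc]
      abel
  exact ⟨L, fun v hv => hL v (lt_sub_iff_add_lt'.2 hv)⟩

lemma hasFDerivAt (h₁ : DiffQuotBound 1 K₁ r f) (h₂ : DiffQuotBound 2 K₂ r f) (hz : ‖z‖ < r) :
    HasFDerivAt f (fderiv ℝ f z) z := by
  obtain ⟨L, hL⟩ := exists_norm_sub_clm_le h₁ h₂ hz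
  exact (hasFDerivAt_of_norm_sub_le_sq (sub_pos.2 hz)
    fun v hv => hL v (lt_sub_iff_add_lt'.1 hv)).differentiableAt.hasFDerivAt

lemma norm_sub_fderiv_le (h₁ : DiffQuotBound 1 K₁ r f) (h₂ : DiffQuotBound 2 K₂ r f) {v : E}
    (hv : ‖z‖ + ‖v‖ < r) : ‖f (z + v) - f z - fderiv ℝ f z v‖ ≤ K₂ / 2 * ‖v‖ ^ 2 := by
  have hz : ‖z‖ < r := by linarith [norm_nonneg v]
  obtain ⟨L, hL⟩ := exists_norm_sub_clm_le h₁ h₂ hz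
  rw [(hasFDerivAt_of_norm_sub_le_sq (sub_pos.2 hz)
    fun v hv => hL v (lt_sub_iff_add_lt'.1 hv)).fderiv]
  exact hL v hv

lemma fderiv_of_succ (h₁ : DiffQuotBound 1 K₁ r f) (h₂ : DiffQuotBound 2 K₂ r f)
    (hf : DiffQuotBound (m + 1) K r f) : DiffQuotBound m K r (fderiv ℝ f) := by
  rcases le_or_gt r 0 with hr | hr
  · exact of_radius_nonpos hr
  refine of_forall_apply (hf.nonneg hr) fun w hw => of_forall_lt fun r' hr' => ?_
  have hnorm : ∀ᶠ h : ℝ in 𝓝[>] 0, ‖h • w‖ = h := by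
    filter_upwards [self_mem_nhdsWithin] with h hh
    rw [norm_smul, hw, mul_one, Real.norm_of_nonneg (le_of_lt hh)]
  refine of_tendsto (l := 𝓝[>] (0 : ℝ)) (G := fun h => diffQuot (h • w) f) ?_ fun z hz => ?_
  · filter_upwards [hnorm, Ioo_mem_nhdsGT (sub_pos.2 hr')] with h hh hlt
    exact (hf (h • w)).mono le_rfl (by linarith [hlt.2])
  · have hslope := ((h₁.hasFDerivAt h₂ (hz.trans hr')).hasLineDerivAt w).tendsto_slope_zero_right
    refine hslope.congr' ?_
    filter_upwards [hnorm] with h hh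
    rw [diffQuot, hh]

lemma fderiv_of_forall {K : ℕ → ℝ} (hf : ∀ m, DiffQuotBound m (K m) r f) (m : ℕ) :
    DiffQuotBound m (K (m + 1)) r (fderiv ℝ f) :=
  fderiv_of_succ (hf 1) (hf 2) (hf (m + 1))

lemma contDiffAt {K : ℕ → ℝ} (hf : ∀ m, DiffQuotBound m (K m) r f) (k : ℕ) (hz : ‖z‖ < r) :
    ContDiffAt ℝ k f z := by
  have hball : ∀ᶠ y in 𝓝 z, ‖y‖ < r := continuous_norm.continuousAt.eventually_lt_const hz
  induction k generalizing F K with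
  | zero =>
    exact contDiffAt_zero.2 ⟨_, hball, fun y hy =>
      ((hf 1).hasFDerivAt (hf 2) hy).continuousAt.continuousWithinAt⟩
  | succ k ih =>
    exact contDiffAt_succ_iff_hasFDerivAt.2
      ⟨fderiv ℝ f, ⟨_, hball, fun y hy => (hf 1).hasFDerivAt (hf 2) hy⟩, ih (fderiv_of_forall hf)⟩

lemma norm_iteratedFDeriv_le {K : ℕ → ℝ} (hf : ∀ m, DiffQuotBound m (K m) r f) (k : ℕ)
    (hz : ‖z‖ < r) : ‖iteratedFDeriv ℝ k f z‖ ≤ K k := by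
  induction k generalizing F K with
  | zero => simpa using hf 0 z hz
  | succ k ih =>
    rw [← norm_iteratedFDeriv_fderiv]
    exact ih (fderiv_of_forall hf)

section Limits

variable [FiniteDimensional ℝ E] {ι : Type*} {l : Filter ι} {G : ι → E → F} {K : ℕ → ℝ}

lemma tendsto_fderiv_zero (hG : ∀ᶠ j in l, ∀ m, DiffQuotBound m (K m) r (G j))
    (hlim : ∀ z, ‖z‖ < r → Tendsto (G · z) l (𝓝 0)) (hz : ‖z‖ < r) :
    Tendsto (fun j => fderiv ℝ (G j) z) l (𝓝 0) := by
  refine tendsto_clm_iff_forall_apply.2 fun w => Metric.tendsto_nhds.2 fun ε hε => ?_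
  have hsmall : ∀ᶠ h : ℝ in 𝓝[>] 0, ‖z‖ + h * ‖w‖ < r ∧ K 2 / 2 * ‖w‖ ^ 2 * h < ε / 2 := by
    have hr : Tendsto (fun h : ℝ => ‖z‖ + h * ‖w‖) (𝓝 0) (𝓝 (‖z‖ + 0 * ‖w‖)) :=
      Continuous.tendsto (by fun_prop) 0
    have hK : Tendsto (fun h : ℝ => K 2 / 2 * ‖w‖ ^ 2 * h) (𝓝 0) (𝓝 (K 2 / 2 * ‖w‖ ^ 2 * 0)) :=
      Continuous.tendsto (by fun_prop) 0
    exact ((hr.eventually_lt_const (by linarith)).and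
      (hK.eventually_lt_const (by linarith))).filter_mono nhdsWithin_le_nhds
  obtain ⟨h, ⟨hhr, hhK⟩, hh : 0 < h⟩ := (hsmall.and self_mem_nhdsWithin).exists
  have hnorm : ‖h • w‖ = h * ‖w‖ := by rw [norm_smul, Real.norm_of_nonneg hh.le]
  have hdiff := (hlim (z + h • w) ((norm_add_le _ _).trans_lt (by rwa [hnorm]))).sub (hlim z hz)
  rw [sub_zero, Metric.tendsto_nhds] at hdiff
  filter_upwards [hG, hdiff (h * (ε / 2)) (by positivity)] with j hj hjdiff
  rw [dist_zero_right] at hjdiff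
  have htaylor := (hj 1).norm_sub_fderiv_le (hj 2) (z := z) (v := h • w) (by rwa [hnorm])
  rw [map_smul, hnorm] at htaylor
  rw [zero_apply, dist_zero_right]
  refine lt_of_mul_lt_mul_left ?_ hh.le
  calc h * ‖fderiv ℝ (G j) z w‖ = ‖h • fderiv ℝ (G j) z w‖ := by
        rw [norm_smul, Real.norm_of_nonneg hh.le]
    _ ≤ ‖G j (z + h • w) - G j z‖ + ‖G j (z + h • w) - G j z - h • fderiv ℝ (G j) z w‖ :=
        norm_le_insert _ _
    _ < h * (ε / 2) + h * (ε / 2) := by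
        refine add_lt_add_of_lt_of_le hjdiff (htaylor.trans ?_)
        nlinarith
    _ = h * ε := by ring

lemma tendsto_iteratedFDeriv_zero (hG : ∀ᶠ j in l, ∀ m, DiffQuotBound m (K m) r (G j))
    (hlim : ∀ z, ‖z‖ < r → Tendsto (G · z) l (𝓝 0)) (k : ℕ) (hz : ‖z‖ < r) :
    Tendsto (fun j => iteratedFDeriv ℝ k (G j) z) l (𝓝 0) := by
  rw [tendsto_zero_iff_norm_tendsto_zero]
  induction k generalizing F K with
  | zero => simpa using (hlim z hz).norm
  | succ k ih =>
    simp only [← norm_iteratedFDeriv_fderiv]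
    exact ih (hG.mono fun j hj => fderiv_of_forall hj) fun z hz => tendsto_fderiv_zero hG hlim hz

-- The error of the time slope is controlled by the difference quotient bounds and tends to `0`
-- pointwise, hence so do all its derivatives in space.
lemma hasDerivWithinAt_iteratedFDeriv {v : ℝ → E → F} {g : E → F} {I : Set ℝ} {t : ℝ}
    {K' : ℕ → ℝ} (hv : ∀ τ ∈ I, ∀ m, DiffQuotBound m (K m) r (v τ)) (ht : t ∈ I)
    (hslope : ∀ τ ∈ I, τ ≠ t → ∀ m,
      DiffQuotBound m (K' m) r (fun z => (τ - t)⁻¹ • (v τ z - v t z)))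
    (hg : ∀ m, DiffQuotBound m (K' m) r g)
    (hderiv : ∀ z, ‖z‖ < r → HasDerivWithinAt (fun τ => v τ z) (g z) I t) (k : ℕ)
    (hz : ‖z‖ < r) :
    HasDerivWithinAt (fun τ => iteratedFDeriv ℝ k (v τ) z) (iteratedFDeriv ℝ k g z) I t := by
  rw [hasDerivWithinAt_iff_tendsto_slope, ← tendsto_sub_nhds_zero_iff]
  have herr : ∀ᶠ τ in 𝓝[I \ {t}] t, ∀ m,
      DiffQuotBound m (K' m + K' m) r (fun z => (τ - t)⁻¹ • (v τ z - v t z) - g z) := by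
    filter_upwards [self_mem_nhdsWithin] with τ hτ m
    exact (hslope τ hτ.1 hτ.2 m).sub (hg m)
  refine (tendsto_iteratedFDeriv_zero herr (fun z hz => ?_) k hz).congr' ?_
  · exact tendsto_sub_nhds_zero_iff.2 (hasDerivWithinAt_iff_tendsto_slope.1 (hderiv z hz))
  · filter_upwards [self_mem_nhdsWithin] with τ hτ
    have hvτ := contDiffAt (hv τ hτ.1) k hz
    have hvt := contDiffAt (hv t ht) k hz
    rw [fun_iteratedFDeriv_sub_apply ((hvτ.sub hvt).const_smul _) (contDiffAt hg k hz),
      iteratedFDeriv_const_smul_apply' (hvτ.sub hvt), fun_iteratedFDeriv_sub_apply hvτ hvt,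
      slope_def_module]

end Limits

end DiffQuotBound

end DifferenceQuotients

section SecondDerivatives

variable {n : ℕ} {f g : En n × ℝ → ℝ} {p : En n × ℝ}

lemma differentiableAt_fderiv_apply (hf : ContDiffAt ℝ 2 f p) (v : En n × ℝ) :
    DifferentiableAt ℝ (fun q => fderiv ℝ f q v) p :=
  ((hf.fderiv_right (m := 1) (by norm_num)).differentiableAt one_ne_zero).clm_apply
    (differentiableAt_const v)

lemma D2_eq_fderiv_fderiv (hf : ContDiffAt ℝ 2 f p) (v : En n × ℝ) :
    D2 f p v = fderiv ℝ (fderiv ℝ f) p v v := by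
  have hd := (hf.fderiv_right (m := 1) (by norm_num)).differentiableAt one_ne_zero
  rw [D2, fderiv_clm_apply hd (differentiableAt_const v)]
  simp

lemma D2_const_mul (c : ℝ) (hf : ContDiffAt ℝ 2 f p) (v : En n × ℝ) :
    D2 (fun q => c * f q) p v = c * D2 f p v := by
  have hfd : (fun q => fderiv ℝ (fun q => c * f q) q v) =ᶠ[𝓝 p] fun q => c * fderiv ℝ f q v := by
    filter_upwards [hf.eventually (by simp)] with q hq
    rw [fderiv_const_mul (hq.differentiableAt two_ne_zero), smul_apply, smul_eq_mul]
  rw [D2, hfd.fderiv_eq, fderiv_const_mul (differentiableAt_fderiv_apply hf v), smul_apply,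
    smul_eq_mul, D2]

lemma D2_sub (hf : ContDiffAt ℝ 2 f p) (hg : ContDiffAt ℝ 2 g p) (v : En n × ℝ) :
    D2 (fun q => f q - g q) p v = D2 f p v - D2 g p v := by
  have hfd : (fun q => fderiv ℝ (fun q => f q - g q) q v) =ᶠ[𝓝 p]
      fun q => fderiv ℝ f q v - fderiv ℝ g q v := by
    filter_upwards [hf.eventually (by simp), hg.eventually (by simp)] with q hq hq'
    rw [fderiv_fun_sub (hq.differentiableAt two_ne_zero) (hq'.differentiableAt two_ne_zero),
      sub_apply]
  rw [D2, hfd.fderiv_eq, fderiv_fun_sub (differentiableAt_fderiv_apply hf v)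
    (differentiableAt_fderiv_apply hg v), sub_apply, D2, D2]

lemma fderiv_comp_equiv_add {E F : Type*} [NormedAddCommGroup E] [NormedSpace ℝ E]
    [NormedAddCommGroup F] [NormedSpace ℝ F] (f : E → F) (T : E ≃L[ℝ] E) (b p v : E) :
    fderiv ℝ (fun q => f (T q + b)) p v = fderiv ℝ f (T p + b) (T v) := by
  have hT := T.comp_right_fderiv (f := fun q => f (q + b)) (x := p)
  rw [fderiv_comp_add_right] at hT
  exact congrArg (fun L : E →L[ℝ] F => L v) hT

lemma D2_comp_equiv_add (f : En n × ℝ → ℝ) (T : (En n × ℝ) ≃L[ℝ] (En n × ℝ))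
    (b p v : En n × ℝ) :
    D2 (fun q => f (T q + b)) p v = D2 f (T p + b) (T v) := by
  simp only [D2, fderiv_comp_equiv_add]
  exact fderiv_comp_equiv_add (fun q => fderiv ℝ f q (T v)) T b p v

open InnerProductSpace in
lemma sum_orthonormalBasis_apply_self_eq {E ι : Type*} [NormedAddCommGroup E]
    [InnerProductSpace ℝ E] [FiniteDimensional ℝ E] [Fintype ι] (B : E →L[ℝ] E →L[ℝ] ℝ)
    (b b' : OrthonormalBasis ι ℝ E) : ∑ i, B (b i) (b i) = ∑ i, B (b' i) (b' i) := by
  have h := congrArg (TensorProduct.lift B.toLinearMap₁₂)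
    ((canonicalCovariantTensor_eq_sum E b).symm.trans (canonicalCovariantTensor_eq_sum E b'))
  simp only [map_sum, TensorProduct.lift.tmul] at h
  exact h

end SecondDerivatives

section AHarmonic

variable {n : ℕ} {a : ℝ} {f g : En n × ℝ → ℝ} {Ω : Set (En n × ℝ)}

namespace IsAHarmonicOn

lemma mono (hf : IsAHarmonicOn a f Ω) {Ω' : Set (En n × ℝ)} (h : Ω' ⊆ Ω) : IsAHarmonicOn a f Ω' :=
  ⟨hf.1.mono h, fun p hp => hf.2 p (h hp)⟩

lemma contDiffAt (hf : IsAHarmonicOn a f Ω) (hΩ : IsOpen Ω) {p : En n × ℝ} (hp : p ∈ Ω) :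
    ContDiffAt ℝ 2 f p :=
  hf.1.contDiffAt (hΩ.mem_nhds hp)

lemma differentiableAt (hf : IsAHarmonicOn a f Ω) (hΩ : IsOpen Ω) {p : En n × ℝ} (hp : p ∈ Ω) :
    DifferentiableAt ℝ f p :=
  (hf.contDiffAt hΩ hp).differentiableAt two_ne_zero

lemma const_mul (c : ℝ) (hf : IsAHarmonicOn a f Ω) (hΩ : IsOpen Ω) :
    IsAHarmonicOn a (fun p => c * f p) Ω := by
  refine ⟨contDiffOn_const.mul hf.1, fun p hp => ?_⟩
  have hfp := hf.contDiffAt hΩ hp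
  simp only [lap, D2_const_mul c hfp, ← Finset.mul_sum,
    fderiv_const_mul (hf.differentiableAt hΩ hp), smul_apply, smul_eq_mul]
  have h := hf.2 p hp
  rw [lap] at h
  linear_combination c * h

lemma sub (hf : IsAHarmonicOn a f Ω) (hg : IsAHarmonicOn a g Ω) (hΩ : IsOpen Ω) :
    IsAHarmonicOn a (fun p => f p - g p) Ω := by
  refine ⟨hf.1.sub hg.1, fun p hp => ?_⟩
  simp only [lap, D2_sub (hf.contDiffAt hΩ hp) (hg.contDiffAt hΩ hp), Finset.sum_sub_distrib,
    fderiv_fun_sub (hf.differentiableAt hΩ hp) (hg.differentiableAt hΩ hp), sub_apply]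
  have h₁ := hf.2 p hp
  have h₂ := hg.2 p hp
  rw [lap] at h₁ h₂
  linear_combination h₁ - h₂

end IsAHarmonicOn

/-- The affine isometry `(x, y) ↦ (A x + c, y)` of `ℝⁿ × ℝ`, which preserves `a`-harmonicity. -/
def horizontalIsometry (A : En n ≃ₗᵢ[ℝ] En n) (c : En n) (p : En n × ℝ) : En n × ℝ :=
  (A p.1 + c, p.2)

lemma horizontalIsometry_eq (A : En n ≃ₗᵢ[ℝ] En n) (c : En n) :
    horizontalIsometry A c =
      fun p => A.toContinuousLinearEquiv.prodCongr (.refl ℝ ℝ) p + (c, 0) := by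
  ext p <;> simp [horizontalIsometry]

lemma contDiff_horizontalIsometry (A : En n ≃ₗᵢ[ℝ] En n) (c : En n) :
    ContDiff ℝ 2 (horizontalIsometry A c) := by
  rw [horizontalIsometry_eq]
  exact (ContinuousLinearEquiv.contDiff _).add contDiff_const

lemma fderiv_comp_horizontalIsometry_vertical (f : En n × ℝ → ℝ) (A : En n ≃ₗᵢ[ℝ] En n) (c : En n)
    (p : En n × ℝ) :
    fderiv ℝ (fun q => f (horizontalIsometry A c q)) p (0, 1) =
      fderiv ℝ f (horizontalIsometry A c p) (0, 1) := by
  simp only [horizontalIsometry_eq, fderiv_comp_equiv_add]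
  simp

lemma lap_comp_horizontalIsometry {A : En n ≃ₗᵢ[ℝ] En n} {c : En n} {p : En n × ℝ}
    (hf : ContDiffAt ℝ 2 f (horizontalIsometry A c p)) :
    lap (fun q => f (horizontalIsometry A c q)) p = lap f (horizontalIsometry A c p) := by
  have hbasis := sum_orthonormalBasis_apply_self_eq
    ((fderiv ℝ (fderiv ℝ f) (horizontalIsometry A c p)).bilinearComp (.inl ℝ _ _) (.inl ℝ _ _))
    ((EuclideanSpace.basisFun (Fin n) ℝ).map A) (EuclideanSpace.basisFun (Fin n) ℝ)
  simp only [horizontalIsometry_eq] at hf hbasis ⊢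
  simp only [lap, D2_comp_equiv_add, D2_eq_fderiv_fderiv hf]
  simpa using hbasis

lemma IsAHarmonicOn.comp_horizontalIsometry (hf : IsAHarmonicOn a f Ω) (hΩ : IsOpen Ω)
    (A : En n ≃ₗᵢ[ℝ] En n) (c : En n) :
    IsAHarmonicOn a (fun p => f (horizontalIsometry A c p)) (horizontalIsometry A c ⁻¹' Ω) := by
  refine ⟨hf.1.comp (contDiff_horizontalIsometry A c).contDiffOn fun p hp => hp, fun p hp => ?_⟩
  rw [lap_comp_horizontalIsometry (hf.contDiffAt hΩ hp), fderiv_comp_horizontalIsometry_vertical]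
  exact hf.2 _ hp

end AHarmonic

section CylinderSolutions

variable {n : ℕ}

/-- The open cylinder `B_R^0 × (0, S)`. -/
def halfCylinder (n : ℕ) (R S : ℝ) : Set (En n × ℝ) := {p | ‖p.1‖ < R ∧ 0 < p.2 ∧ p.2 < S}

/-- The cylinder `B_R^0 × [0, S)`, which contains its base. -/
def halfCylinderWithBase (n : ℕ) (R S : ℝ) : Set (En n × ℝ) := {p | ‖p.1‖ < R ∧ 0 ≤ p.2 ∧ p.2 < S}

lemma isOpen_halfCylinder (R S : ℝ) : IsOpen (halfCylinder n R S) :=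
  (isOpen_lt continuous_fst.norm continuous_const).inter
    ((isOpen_lt continuous_const continuous_snd).inter (isOpen_lt continuous_snd continuous_const))

lemma halfCylinder_subset_halfCylinderWithBase (R S : ℝ) :
    halfCylinder n R S ⊆ halfCylinderWithBase n R S :=
  fun _ hp => ⟨hp.1, hp.2.1.le, hp.2.2⟩

/-- Classical solutions of the extended fractional heat equation on
`[-S, 0] × (B_R^0 × [0, S))`. Cylinders, unlike half balls, are compatible with horizontal
translations, hence with difference quotients. -/
structure IsCylinderSolution (a R S : ℝ) (u : ℝ → En n × ℝ → ℝ) : Prop where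
  continuousOn : ContinuousOn (fun q : ℝ × (En n × ℝ) => u q.1 q.2)
    (Icc (-S) 0 ×ˢ halfCylinderWithBase n R S)
  aHarmonic : ∀ t ∈ Icc (-S) 0, IsAHarmonicOn a (u t) (halfCylinder n R S)
  boundary : ∀ t ∈ Ioc (-S) 0, ∀ x : En n, ‖x‖ < R → ∃ L,
    HasDerivWithinAt (fun τ => u τ (x, 0)) L (Icc (-S) 0) t ∧ NormalDerivLimit a (u t) x L

namespace IsCylinderSolution

variable {a R S : ℝ} {u v : ℝ → En n × ℝ → ℝ}

lemma eventually_differentiableAt (hu : IsCylinderSolution a R S u) {t : ℝ}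
    (ht : t ∈ Ioc (-S) 0) {x : En n} (hx : ‖x‖ < R) :
    ∀ᶠ y in 𝓝[>] (0 : ℝ), DifferentiableAt ℝ (u t) (x, y) := by
  filter_upwards [Ioo_mem_nhdsGT (show 0 < S by linarith [ht.1, ht.2])] with y hy
  exact (hu.aHarmonic t (Ioc_subset_Icc_self ht)).differentiableAt (isOpen_halfCylinder R S)
    ⟨hx, hy.1, hy.2⟩

lemma mono (hu : IsCylinderSolution a R S u) {R' S' : ℝ} (hR : R' ≤ R) (hS : S' ≤ S) :
    IsCylinderSolution a R' S' u where
  continuousOn := hu.continuousOn.mono <| prod_mono (Icc_subset_Icc_left (by linarith))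
    fun p hp => ⟨hp.1.trans_le hR, hp.2.1, hp.2.2.trans_le hS⟩
  aHarmonic t ht := (hu.aHarmonic t ⟨by linarith [ht.1], ht.2⟩).mono
    fun p hp => ⟨hp.1.trans_le hR, hp.2.1, hp.2.2.trans_le hS⟩
  boundary t ht x hx := by
    obtain ⟨L, hL, hlim⟩ := hu.boundary t ⟨by linarith [ht.1], ht.2⟩ x (hx.trans_le hR)
    exact ⟨L, hL.mono (Icc_subset_Icc_left (by linarith)), hlim⟩

lemma const_mul (c : ℝ) (hu : IsCylinderSolution a R S u) :
    IsCylinderSolution a R S (fun t p => c * u t p) where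
  continuousOn := continuousOn_const.mul hu.continuousOn
  aHarmonic t ht := (hu.aHarmonic t ht).const_mul c (isOpen_halfCylinder R S)
  boundary t ht x hx := by
    obtain ⟨L, hL, hlim⟩ := hu.boundary t ht x hx
    refine ⟨c * L, hL.const_mul c, (Tendsto.const_mul c hlim).congr' ?_⟩
    filter_upwards [hu.eventually_differentiableAt ht hx] with y hy
    rw [fderiv_const_mul hy, smul_apply, smul_eq_mul]
    ring

lemma sub (hu : IsCylinderSolution a R S u) (hv : IsCylinderSolution a R S v) :
    IsCylinderSolution a R S (fun t p => u t p - v t p) where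
  continuousOn := hu.continuousOn.sub hv.continuousOn
  aHarmonic t ht := (hu.aHarmonic t ht).sub (hv.aHarmonic t ht) (isOpen_halfCylinder R S)
  boundary t ht x hx := by
    obtain ⟨L, hL, hlim⟩ := hu.boundary t ht x hx
    obtain ⟨L', hL', hlim'⟩ := hv.boundary t ht x hx
    refine ⟨L - L', hL.sub hL', (Tendsto.sub hlim hlim').congr' ?_⟩
    filter_upwards [hu.eventually_differentiableAt ht hx, hv.eventually_differentiableAt ht hx]
      with y hy hy'
    rw [fderiv_fun_sub hy hy', sub_apply]
    ring

lemma comp_horizontalIsometry (hu : IsCylinderSolution a R S u) (A : En n ≃ₗᵢ[ℝ] En n) (c : En n) :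
    IsCylinderSolution a (R - ‖c‖) S (fun t p => u t (horizontalIsometry A c p)) := by
  have hR : ∀ {x : En n}, ‖x‖ < R - ‖c‖ → ‖A x + c‖ < R := fun {x} hx =>
    norm_add_lt_of_lt_sub_norm (by rwa [A.norm_map])
  refine ⟨hu.continuousOn.comp (f := fun q : ℝ × (En n × ℝ) => (q.1, horizontalIsometry A c q.2))
    ?_ fun q hq => ⟨hq.1, hR hq.2.1, hq.2.2⟩, fun t ht => ?_, fun t ht x hx => ?_⟩
  · exact (continuous_fst.prodMk
      ((contDiff_horizontalIsometry A c).continuous.comp continuous_snd)).continuousOn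
  · exact ((hu.aHarmonic t ht).comp_horizontalIsometry (isOpen_halfCylinder R S) A c).mono
      fun p hp => ⟨hR hp.1, hp.2⟩
  · obtain ⟨L, hL, hlim⟩ := hu.boundary t ht (A x + c) (hR hx)
    refine ⟨L, hL, ?_⟩
    simp only [NormalDerivLimit, fderiv_comp_horizontalIsometry_vertical]
    exact hlim

lemma diffQuot (hu : IsCylinderSolution a R S u) (v : En n) :
    IsCylinderSolution a (R - ‖v‖) S
      (fun t p => diffQuot v (fun x => u t (x, p.2)) p.1) :=
  ((hu.comp_horizontalIsometry (.refl ℝ _) v).sub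
    (hu.mono (sub_le_self R (norm_nonneg v)) le_rfl)).const_mul ‖v‖⁻¹

end IsCylinderSolution

end CylinderSolutions

section OneVariableTests

/-- `f` has derivative `f'` near `x`, and `f'` has derivative `c` at `x`. -/
def HasSecondDerivAt (f f' : ℝ → ℝ) (c x : ℝ) : Prop :=
  (∀ᶠ ξ in 𝓝 x, HasDerivAt f (f' ξ) ξ) ∧ HasDerivAt f' c x

namespace HasSecondDerivAt

variable {f f' g g' : ℝ → ℝ} {c d x : ℝ}

lemma of_forall (hf : ∀ ξ, HasDerivAt f (f' ξ) ξ) (hf' : HasDerivAt f' c x) :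
    HasSecondDerivAt f f' c x :=
  ⟨.of_forall hf, hf'⟩

lemma add (hf : HasSecondDerivAt f f' c x) (hg : HasSecondDerivAt g g' d x) :
    HasSecondDerivAt (fun ξ => f ξ + g ξ) (fun ξ => f' ξ + g' ξ) (c + d) x :=
  ⟨by filter_upwards [hf.1, hg.1] with ξ h₁ h₂ using h₁.add h₂, hf.2.add hg.2⟩

lemma sub (hf : HasSecondDerivAt f f' c x) (hg : HasSecondDerivAt g g' d x) :
    HasSecondDerivAt (fun ξ => f ξ - g ξ) (fun ξ => f' ξ - g' ξ) (c - d) x :=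
  ⟨by filter_upwards [hf.1, hg.1] with ξ h₁ h₂ using h₁.sub h₂, hf.2.sub hg.2⟩

lemma mul (hf : HasSecondDerivAt f f' c x) (hg : HasSecondDerivAt g g' d x) :
    HasSecondDerivAt (fun ξ => f ξ * g ξ) (fun ξ => f' ξ * g ξ + f ξ * g' ξ)
      (c * g x + 2 * (f' x * g' x) + f x * d) x :=
  ⟨by filter_upwards [hf.1, hg.1] with ξ h₁ h₂ using h₁.mul h₂,
    ((hf.2.mul hg.1.self_of_nhds).add (hf.1.self_of_nhds.mul hg.2)).congr_deriv (by ring)⟩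

lemma const_mul (b : ℝ) (hf : HasSecondDerivAt f f' c x) :
    HasSecondDerivAt (fun ξ => b * f ξ) (fun ξ => b * f' ξ) (b * c) x :=
  ⟨by filter_upwards [hf.1] with ξ h using h.const_mul b, hf.2.const_mul b⟩

lemma comp_line (b : ℝ) (hf : HasSecondDerivAt f f' c x) :
    HasSecondDerivAt (fun σ => f (x + σ * b)) (fun σ => f' (x + σ * b) * b) (c * b * b) 0 := by
  have hline : ∀ σ, HasDerivAt (fun σ : ℝ => x + σ * b) b σ := fun σ => by
    simpa using ((hasDerivAt_id σ).mul_const b).const_add x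
  have hx : Tendsto (fun σ : ℝ => x + σ * b) (𝓝 0) (𝓝 x) := by
    simpa using (hline 0).continuousAt.tendsto
  refine ⟨?_, ?_⟩
  · filter_upwards [hx.eventually hf.1] with σ h using h.comp σ (hline σ)
  · exact ((hf.2.comp_of_eq 0 (hline 0) (by simp)).mul_const b)

end HasSecondDerivAt

lemma hasSecondDerivAt_rpow_const {y : ℝ} (hy : 0 < y) (α : ℝ) :
    HasSecondDerivAt (fun η => η ^ α) (fun η => α * η ^ (α - 1)) (α * (α - 1) * y ^ (α - 2)) y := by
  refine ⟨?_, ?_⟩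
  · filter_upwards [eventually_ne_nhds hy.ne'] with η hη using Real.hasDerivAt_rpow_const (.inl hη)
  · refine ((Real.hasDerivAt_rpow_const (.inl hy.ne')).const_mul α).congr_deriv ?_
    ring_nf

lemma hasSecondDerivAt_sq_add_rpow {x c : ℝ} (h : x ^ 2 + c ≠ 0) (p : ℝ) :
    HasSecondDerivAt (fun ξ => (ξ ^ 2 + c) ^ p) (fun ξ => 2 * p * (ξ * (ξ ^ 2 + c) ^ (p - 1)))
      (2 * p * (x ^ 2 + c) ^ (p - 1) + 4 * p * (p - 1) * x ^ 2 * (x ^ 2 + c) ^ (p - 2)) x := by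
  have hrpow : ∀ (q : ℝ) {ξ : ℝ}, ξ ^ 2 + c ≠ 0 →
      HasDerivAt (fun ξ => (ξ ^ 2 + c) ^ q) (2 * ξ * q * (ξ ^ 2 + c) ^ (q - 1)) ξ :=
    fun q ξ hξ => by
      have hsq : HasDerivAt (fun ξ : ℝ => ξ ^ 2 + c) (2 * ξ) ξ := by
        simpa using (hasDerivAt_pow 2 ξ).add_const c
      exact hsq.rpow_const (.inl hξ)
  refine ⟨?_, ?_⟩
  · have hne : ∀ᶠ ξ in 𝓝 x, ξ ^ 2 + c ≠ 0 :=
      ContinuousAt.eventually_ne (by fun_prop) h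
    filter_upwards [hne] with ξ hξ using (hrpow p hξ).congr_deriv (by ring)
  · refine (((hasDerivAt_id x).mul (hrpow (p - 1) h)).const_mul (2 * p)).congr_deriv ?_
    rw [show p - 1 - 1 = p - 2 by ring, id]
    ring

lemma eventually_lt_of_tendsto_rpow_mul_deriv {φ φ' : ℝ → ℝ} {a ℓ : ℝ}
    (hcont : ContinuousWithinAt φ (Ici 0) 0)
    (hderiv : ∀ᶠ σ in 𝓝[>] (0 : ℝ), HasDerivAt φ (φ' σ) σ)
    (hlim : Tendsto (fun σ : ℝ => σ ^ a * φ' σ) (𝓝[>] 0) (𝓝 ℓ)) (hℓ : 0 < ℓ) :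
    ∀ᶠ σ in 𝓝[>] (0 : ℝ), φ 0 < φ σ := by
  obtain ⟨ε, hε, h⟩ := (nhdsGT_basis (0 : ℝ)).mem_iff.1
    (hderiv.and (hlim.eventually_const_lt hℓ))
  have hmono : StrictMonoOn φ (Ico 0 ε) := by
    refine strictMonoOn_of_deriv_pos (convex_Ico 0 ε) (fun σ hσ => ?_) fun σ hσ => ?_
    · rcases hσ.1.eq_or_lt with rfl | hσ0
      · exact hcont.mono Ico_subset_Ici_self
      · exact (h ⟨hσ0, hσ.2⟩).1.continuousAt.continuousWithinAt
    · rw [interior_Ico] at hσ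
      rw [(h hσ).1.deriv]
      exact pos_of_mul_pos_right (h hσ).2 (Real.rpow_nonneg hσ.1.le a)
  filter_upwards [Ioo_mem_nhdsGT hε] with σ hσ
  exact hmono ⟨le_rfl, hε⟩ ⟨hσ.1.le, hσ.2⟩ hσ.1

lemma nonpos_of_tendsto_rpow_mul_deriv_of_le {φ φ' : ℝ → ℝ} {a ℓ : ℝ}
    (hcont : ContinuousWithinAt φ (Ici 0) 0)
    (hderiv : ∀ᶠ σ in 𝓝[>] (0 : ℝ), HasDerivAt φ (φ' σ) σ)
    (hlim : Tendsto (fun σ : ℝ => σ ^ a * φ' σ) (𝓝[>] 0) (𝓝 ℓ))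
    (hmax : ∀ᶠ σ in 𝓝[>] (0 : ℝ), φ σ ≤ φ 0) : ℓ ≤ 0 := by
  by_contra! hℓ
  obtain ⟨σ, hlt, hle⟩ :=
    ((eventually_lt_of_tendsto_rpow_mul_deriv hcont hderiv hlim hℓ).and hmax).exists
  exact hlt.not_ge hle

lemma HasSecondDerivAt.nonpos_of_isLocalMax {φ φ' : ℝ → ℝ} {c : ℝ} (h : HasSecondDerivAt φ φ' c 0)
    (hmax : IsLocalMax φ 0) : c ≤ 0 := by
  have hφ' : φ' 0 = 0 := hmax.hasDerivAt_eq_zero h.1.self_of_nhds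
  have hslope := (hasDerivAt_iff_tendsto_slope_zero.1 h.2).mono_left
    (nhdsWithin_mono 0 fun σ (hσ : 0 < σ) => hσ.ne')
  simp only [zero_add, hφ', sub_zero, smul_eq_mul, ← Real.rpow_neg_one] at hslope
  exact nonpos_of_tendsto_rpow_mul_deriv_of_le h.1.self_of_nhds.continuousAt.continuousWithinAt
    (nhdsWithin_le_nhds h.1) hslope (nhdsWithin_le_nhds hmax)

lemma nonneg_of_hasDerivWithinAt_of_forall_le {f : ℝ → ℝ} {d t₀ t : ℝ} (ht : t₀ < t)
    (hf : HasDerivWithinAt f d (Icc t₀ t) t) (hmax : ∀ τ ∈ Icc t₀ t, f τ ≤ f t) : 0 ≤ d := by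
  have hcone : t₀ - t ∈ posTangentConeAt (Icc t₀ t) t :=
    sub_mem_posTangentConeAt_of_segment_subset (by rw [segment_symm, segment_eq_Icc ht.le])
  have hlocal : IsLocalMaxOn f (Icc t₀ t) t := eventually_mem_nhdsWithin.mono hmax
  have h := hlocal.hasFDerivWithinAt_nonpos hf.hasFDerivWithinAt hcone
  simp only [ContinuousLinearMap.toSpanSingleton_apply, smul_eq_mul] at h
  exact nonneg_of_mul_nonpos_right h (by linarith)

end OneVariableTests

section InteriorTest

variable {n : ℕ}

lemma hasSecondDerivAt_line {f : En n × ℝ → ℝ} {p : En n × ℝ} (hf : ContDiffAt ℝ 2 f p)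
    (v : En n × ℝ) :
    HasSecondDerivAt (fun σ : ℝ => f (p + σ • v)) (fun σ => fderiv ℝ f (p + σ • v) v)
      (D2 f p v) 0 := by
  have hline : ∀ σ : ℝ, HasDerivAt (fun σ : ℝ => p + σ • v) v σ := fun σ => by
    simpa using ((hasDerivAt_id σ).smul_const v).const_add p
  have hp : Tendsto (fun σ : ℝ => p + σ • v) (𝓝 0) (𝓝 p) := by
    simpa using (hline 0).continuousAt.tendsto
  refine ⟨?_, ?_⟩
  · filter_upwards [hp.eventually (hf.eventually (by simp))] with σ hσ
    exact (hσ.differentiableAt two_ne_zero).hasFDerivAt.comp_hasDerivAt σ (hline σ)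
  · exact (differentiableAt_fderiv_apply hf v).hasFDerivAt.comp_hasDerivAt_of_eq 0 (hline 0)
      (by simp)

lemma fderiv_eq_and_D2_le_of_isLocalMax_sub {f : En n × ℝ → ℝ} {p v : En n × ℝ} {ψ ψ' : ℝ → ℝ}
    {c : ℝ} (hf : ContDiffAt ℝ 2 f p) (hψ : HasSecondDerivAt ψ ψ' c 0)
    (hmax : IsLocalMax (fun σ => f (p + σ • v) - ψ σ) 0) :
    fderiv ℝ f p v = ψ' 0 ∧ D2 f p v ≤ c := by
  have h := (hasSecondDerivAt_line hf v).sub hψ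
  have h₁ := hmax.hasDerivAt_eq_zero h.1.self_of_nhds
  have h₂ := h.nonpos_of_isLocalMax hmax
  simp only [zero_smul, add_zero] at h₁
  exact ⟨sub_eq_zero.1 h₁, sub_nonpos.1 h₂⟩

/-- `∂_X² P + ∂_y² P + (b / y) ∂_y P = ℓ` at `(X, y)`, where both second derivatives are only
required to exist along the coordinate axes. -/
def HasAxialLaplacianAt (b : ℝ) (P : ℝ → ℝ → ℝ) (ℓ X y : ℝ) : Prop :=
  ∃ (PX Py : ℝ → ℝ) (PXX Pyy : ℝ), HasSecondDerivAt (fun ξ => P ξ y) PX PXX X ∧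
    HasSecondDerivAt (fun η => P X η) Py Pyy y ∧ PXX + Pyy + b / y * Py y = ℓ

lemma isLocalMax_comp_line {f : En n × ℝ → ℝ} {p : En n × ℝ} (hf : IsLocalMax f p)
    (v : En n × ℝ) : IsLocalMax (fun σ : ℝ => f (p + σ • v)) 0 := by
  have hline : Tendsto (fun σ : ℝ => p + σ • v) (𝓝 0) (𝓝 p) := by
    have : ContinuousAt (fun σ : ℝ => p + σ • v) 0 := by fun_prop
    simpa [ContinuousAt] using this
  filter_upwards [hline.eventually hf] with σ hσ
  simpa using hσ

variable {f : En n × ℝ → ℝ} {p : En n × ℝ} {e : En n} {P : ℝ → ℝ → ℝ} {P' : ℝ → ℝ} {G c : ℝ}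

lemma fderiv_vertical_eq_and_D2_le_of_isLocalMax_sub (hf : ContDiffAt ℝ 2 f p)
    (hP : HasSecondDerivAt (fun η => P ⟪e, p.1⟫ η) P' c p.2)
    (hmax : IsLocalMax (fun q => f q - (P ⟪e, q.1⟫ q.2 + G * ‖q.1‖ ^ 2)) p) :
    fderiv ℝ f p (0, 1) = P' p.2 ∧ D2 f p (0, 1) ≤ c := by
  have hψ := (hP.comp_line 1).add
    (.of_forall (f' := fun _ => 0) (fun _ => hasDerivAt_const _ (G * ‖p.1‖ ^ 2))
      (hasDerivAt_const 0 (0 : ℝ)))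
  have h := fderiv_eq_and_D2_le_of_isLocalMax_sub (v := (0, 1)) hf hψ
    (by simpa using isLocalMax_comp_line hmax (0, 1))
  simpa using h

lemma D2_horizontal_le_of_isLocalMax_sub (hf : ContDiffAt ℝ 2 f p)
    (hP : HasSecondDerivAt (fun ξ => P ξ p.2) P' c ⟪e, p.1⟫)
    (hmax : IsLocalMax (fun q => f q - (P ⟪e, q.1⟫ q.2 + G * ‖q.1‖ ^ 2)) p) (i : Fin n) :
    D2 f p (EuclideanSpace.single i 1, 0) ≤ c * e i ^ 2 + 2 * G := by
  have hsq : ∀ σ, HasDerivAt (fun σ : ℝ => G * (‖p.1‖ ^ 2 + 2 * σ * p.1 i + σ ^ 2))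
      (G * (2 * p.1 i + 2 * σ)) σ := fun σ => by
    have := ((((hasDerivAt_id σ).const_mul 2).mul_const (p.1 i)).const_add (‖p.1‖ ^ 2)).add
      (hasDerivAt_pow 2 σ)
    simpa using this.const_mul G
  have hsq' : HasDerivAt (fun σ : ℝ => G * (2 * p.1 i + 2 * σ)) (G * 2) 0 := by
    simpa using (((hasDerivAt_id (0 : ℝ)).const_mul 2).const_add (2 * p.1 i)).const_mul G
  have hψ := (hP.comp_line (e i)).add (.of_forall hsq hsq')
  have h := fderiv_eq_and_D2_le_of_isLocalMax_sub (v := (EuclideanSpace.single i 1, 0)) hf hψ <| by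
    refine (isLocalMax_comp_line hmax (EuclideanSpace.single i 1, 0)).congr (.of_forall fun σ => ?_)
    simp [inner_add_right, inner_smul_right, EuclideanSpace.inner_single_right, norm_add_sq_real,
      norm_smul, mul_assoc]
  linarith [h.2]

lemma IsAHarmonicOn.nonneg_of_isLocalMax_sub {a ℓ : ℝ} {Ω : Set (En n × ℝ)}
    (hf : IsAHarmonicOn a f Ω) (hΩ : IsOpen Ω) (hp : p ∈ Ω) (he : ‖e‖ = 1)
    (hP : HasAxialLaplacianAt a P ℓ ⟪e, p.1⟫ p.2)
    (hmax : IsLocalMax (fun q => f q - (P ⟪e, q.1⟫ q.2 + G * ‖q.1‖ ^ 2)) p) :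
    0 ≤ ℓ + 2 * n * G := by
  obtain ⟨PX, Py, PXX, Pyy, hX, hy, hℓ⟩ := hP
  have hfp := hf.contDiffAt hΩ hp
  obtain ⟨hvert, hvert₂⟩ := fderiv_vertical_eq_and_D2_le_of_isLocalMax_sub hfp hy hmax
  have hhoriz : ∑ i, D2 f p (EuclideanSpace.single i 1, 0) ≤ PXX + 2 * n * G := calc
    _ ≤ ∑ i, (PXX * e i ^ 2 + 2 * G) :=
      Finset.sum_le_sum fun i _ => D2_horizontal_le_of_isLocalMax_sub hfp hX hmax i
    _ = PXX * ‖e‖ ^ 2 + 2 * n * G := by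
      simp [Finset.sum_add_distrib, ← Finset.mul_sum, EuclideanSpace.real_norm_sq_eq]
      ring
    _ = PXX + 2 * n * G := by rw [he, one_pow, mul_one]
  have hharm := hf.2 p hp
  rw [lap, hvert] at hharm
  linarith

end InteriorTest

section Barrier

namespace HasAxialLaplacianAt

variable {b ℓ m X y : ℝ} {P Q : ℝ → ℝ → ℝ}

lemma add (hP : HasAxialLaplacianAt b P ℓ X y) (hQ : HasAxialLaplacianAt b Q m X y) :
    HasAxialLaplacianAt b (fun ξ η => P ξ η + Q ξ η) (ℓ + m) X y := by
  obtain ⟨PX, Py, PXX, Pyy, hX, hy, hℓ⟩ := hP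
  obtain ⟨QX, Qy, QXX, Qyy, hX', hy', hm⟩ := hQ
  exact ⟨_, _, _, _, hX.add hX', hy.add hy', by linear_combination hℓ + hm⟩

lemma const_mul (c : ℝ) (hP : HasAxialLaplacianAt b P ℓ X y) :
    HasAxialLaplacianAt b (fun ξ η => c * P ξ η) (c * ℓ) X y := by
  obtain ⟨PX, Py, PXX, Pyy, hX, hy, hℓ⟩ := hP
  exact ⟨_, _, _, _, hX.const_mul c, hy.const_mul c, by linear_combination c * hℓ⟩

lemma sub (hP : HasAxialLaplacianAt b P ℓ X y) (hQ : HasAxialLaplacianAt b Q m X y) :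
    HasAxialLaplacianAt b (fun ξ η => P ξ η - Q ξ η) (ℓ - m) X y := by
  simpa only [neg_one_mul, ← sub_eq_add_neg] using hP.add (hQ.const_mul (-1))

lemma rpow_mul {α : ℝ} (hP : HasAxialLaplacianAt (1 + α) P ℓ X y) (hy : 0 < y) :
    HasAxialLaplacianAt (1 - α) (fun ξ η => η ^ α * P ξ η) (y ^ α * ℓ) X y := by
  obtain ⟨PX, Py, PXX, Pyy, hX, hPy, hℓ⟩ := hP
  refine ⟨_, _, _, _, hX.const_mul (y ^ α), (hasSecondDerivAt_rpow_const hy α).mul hPy, ?_⟩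
  rw [Real.rpow_sub_one hy.ne', Real.rpow_sub hy, Real.rpow_two, ← hℓ]
  field_simp
  ring

end HasAxialLaplacianAt

lemma hasAxialLaplacianAt_mul_rpow {X y θ : ℝ} (hN : 0 < X ^ 2 + y ^ 2 + θ) (hy : y ≠ 0)
    (b p : ℝ) :
    HasAxialLaplacianAt b (fun ξ η => ξ * (ξ ^ 2 + η ^ 2 + θ) ^ p)
      (2 * p * (2 * p + 2 + b) * (X * (X ^ 2 + y ^ 2 + θ) ^ (p - 1)) -
        4 * p * (p - 1) * θ * (X * (X ^ 2 + y ^ 2 + θ) ^ (p - 2))) X y := by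
  have hX := (HasSecondDerivAt.of_forall hasDerivAt_id (hasDerivAt_const X (1 : ℝ))).mul
    (hasSecondDerivAt_sq_add_rpow (x := X) (c := y ^ 2 + θ) (by linarith) p)
  have hy' := (hasSecondDerivAt_sq_add_rpow (x := y) (c := X ^ 2 + θ) (by linarith) p).const_mul X
  have hcomm : ∀ η : ℝ, η ^ 2 + (X ^ 2 + θ) = X ^ 2 + η ^ 2 + θ := fun η => by ring
  simp only [← add_assoc, id] at hX
  simp only [hcomm] at hy'
  refine ⟨_, _, _, _, hX, hy', ?_⟩
  rw [show p - 1 = p - 2 + 1 by ring, Real.rpow_add_one hN.ne']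
  field_simp
  ring

/-- An odd function of `X` which is a supersolution of the extension problem away from the
singular point `X = y = θ = 0` and whose boundary values `X / √(X² + θ)` tend to `1` as `θ → 0`.
The second term provides the negative conormal derivative that lets `θ` grow with time. -/
def barrierProfile (s θ X y : ℝ) : ℝ :=
  X * (X ^ 2 + y ^ 2 + θ) ^ (-1 / 2 : ℝ) -
    (1 - s) / 5 * θ ^ (1 - s) * (y ^ (2 * s) * (X * (X ^ 2 + y ^ 2 + θ) ^ (-3 / 2 : ℝ)))

variable {s θ X y : ℝ}

lemma rpow_mul_rpow_le_sq_add (hs : s ∈ Ioo (0 : ℝ) 1) (hθ : 0 ≤ θ) (X : ℝ) (hy : 0 ≤ y) :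
    θ ^ (1 - s) * y ^ (2 * s) ≤ X ^ 2 + y ^ 2 + θ := by
  have hN : 0 ≤ X ^ 2 + y ^ 2 + θ := by positivity
  have : 0 ≤ 1 - s := by linarith [hs.2]
  calc θ ^ (1 - s) * y ^ (2 * s) = θ ^ (1 - s) * (y ^ 2) ^ s := by
        rw [← Real.rpow_natCast y 2, ← Real.rpow_mul hy, Nat.cast_ofNat]
    _ ≤ (X ^ 2 + y ^ 2 + θ) ^ (1 - s) * (X ^ 2 + y ^ 2 + θ) ^ s := by
        gcongr
        · nlinarith [sq_nonneg X, sq_nonneg y]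
        · exact hs.1.le
        · nlinarith [sq_nonneg X]
    _ = X ^ 2 + y ^ 2 + θ := by
        rw [← Real.rpow_add' hN (by simp), sub_add_cancel, Real.rpow_one]

lemma rpow_neg_half_eq_mul {N : ℝ} (hN : 0 < N) :
    N ^ (-1 / 2 : ℝ) = N * N ^ (-3 / 2 : ℝ) := by
  rw [mul_comm, ← Real.rpow_add_one hN.ne']
  norm_num

lemma barrierProfile_nonneg (hs : s ∈ Ioo (0 : ℝ) 1) (hθ : 0 ≤ θ) (hX : 0 ≤ X) (hy : 0 ≤ y) :
    0 ≤ barrierProfile s θ X y := by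
  have hN : 0 ≤ X ^ 2 + y ^ 2 + θ := by positivity
  rcases hN.eq_or_lt with h0 | hN
  · have hX0 : X = 0 := by nlinarith [sq_nonneg X, sq_nonneg y]
    simp [barrierProfile, hX0]
  · have hk : (1 - s) / 5 * (θ ^ (1 - s) * y ^ (2 * s)) ≤ X ^ 2 + y ^ 2 + θ := by
      have := rpow_mul_rpow_le_sq_add hs hθ X hy
      nlinarith [hs.1, hs.2]
    have heq : barrierProfile s θ X y = X * (X ^ 2 + y ^ 2 + θ) ^ (-3 / 2 : ℝ) *
        (X ^ 2 + y ^ 2 + θ - (1 - s) / 5 * (θ ^ (1 - s) * y ^ (2 * s))) := by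
      rw [barrierProfile, rpow_neg_half_eq_mul hN]
      ring
    rw [heq]
    exact mul_nonneg (by positivity) (sub_nonneg.2 hk)

lemma barrierProfile_le (hs : s ≤ 1) (hθ : 0 < θ) (hX : 0 ≤ X) (hy : 0 ≤ y) :
    barrierProfile s θ X y ≤ θ ^ (-1 / 2 : ℝ) * X := by
  have : 0 ≤ 1 - s := by linarith
  calc barrierProfile s θ X y ≤ X * (X ^ 2 + y ^ 2 + θ) ^ (-1 / 2 : ℝ) :=
        sub_le_self _ (by positivity)
    _ ≤ X * θ ^ (-1 / 2 : ℝ) := by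
        refine mul_le_mul_of_nonneg_left ?_ hX
        exact Real.rpow_le_rpow_of_nonpos hθ (by nlinarith) (by norm_num)
    _ = θ ^ (-1 / 2 : ℝ) * X := mul_comm _ _

lemma barrierProfile_base (hs : 0 < s) (θ X : ℝ) :
    barrierProfile s θ X 0 = X * (X ^ 2 + θ) ^ (-1 / 2 : ℝ) := by
  simp [barrierProfile, Real.zero_rpow (show 2 * s ≠ 0 by positivity)]

lemma barrierProfile_zero_base (hs : 0 < s) (hX : 0 < X) : barrierProfile s 0 X 0 = 1 := by
  rw [barrierProfile_base hs, add_zero, ← Real.rpow_natCast X 2, ← Real.rpow_mul hX.le,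
    show ((2 : ℕ) : ℝ) * (-1 / 2) = -1 by norm_num, Real.rpow_neg_one, mul_inv_cancel₀ hX.ne']

lemma exists_hasAxialLaplacianAt_barrierProfile_nonpos (hs : s ∈ Ioo (0 : ℝ) 1) (hθ : 0 ≤ θ)
    (hX : 0 ≤ X) (hy : 0 < y) :
    ∃ ℓ ≤ 0, HasAxialLaplacianAt (1 - 2 * s) (barrierProfile s θ) ℓ X y := by
  have hN : 0 < X ^ 2 + y ^ 2 + θ := by positivity
  refine ⟨_, ?_, (hasAxialLaplacianAt_mul_rpow hN hy.ne' (1 - 2 * s) (-1 / 2)).sub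
    (((hasAxialLaplacianAt_mul_rpow hN hy.ne' (1 + 2 * s) (-3 / 2)).rpow_mul hy).const_mul
      ((1 - s) / 5 * θ ^ (1 - s)))⟩
  have hk := rpow_mul_rpow_le_sq_add hs hθ X hy.le
  generalize X ^ 2 + y ^ 2 + θ = N at hk hN ⊢
  have h₃ : N ^ (-1 / 2 - 1 : ℝ) = N ^ 2 * N ^ (-3 / 2 - 2 : ℝ) := by
    rw [← Real.rpow_natCast, ← Real.rpow_add hN]; norm_num
  have h₅ : N ^ (-1 / 2 - 2 : ℝ) = N * N ^ (-3 / 2 - 2 : ℝ) := by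
    rw [mul_comm, ← Real.rpow_add_one hN.ne']; norm_num
  have h₅' : N ^ (-3 / 2 - 1 : ℝ) = N * N ^ (-3 / 2 - 2 : ℝ) := by
    rw [mul_comm, ← Real.rpow_add_one hN.ne']; norm_num
  rw [h₃, h₅, h₅']
  have hfactor : 0 ≤ (2 - 2 * s) * N ^ 2 + 3 * θ * N -
      (1 - s) / 5 * (θ ^ (1 - s) * y ^ (2 * s)) * (6 * s * N + 15 * θ) := by
    have hc : (1 - s) / 5 * (θ ^ (1 - s) * y ^ (2 * s)) ≤ (1 - s) / 5 * N :=
      mul_le_mul_of_nonneg_left hk (by linarith [hs.2])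
    have hpos : 0 ≤ 6 * s * N + 15 * θ := by have := hs.1; positivity
    have h := mul_le_mul_of_nonneg_right hc hpos
    nlinarith [mul_nonneg (mul_nonneg hs.1.le hθ) hN.le,
      mul_nonneg (sub_nonneg.2 hs.2.le) (sq_nonneg N),
      mul_nonneg (mul_nonneg (sub_nonneg.2 hs.2.le) (sub_nonneg.2 hs.2.le)) (sq_nonneg N)]
  have hPX : 0 ≤ X * N ^ (-3 / 2 - 2 : ℝ) := by positivity
  nlinarith [mul_nonneg hPX hfactor]

lemma hasDerivAt_barrierProfile (hN : 0 < X ^ 2 + y ^ 2 + θ) (hy : y ≠ 0) :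
    HasDerivAt (barrierProfile s θ X)
      (-(X * y * (X ^ 2 + y ^ 2 + θ) ^ (-3 / 2 : ℝ)) -
        (1 - s) / 5 * θ ^ (1 - s) *
          (2 * s * y ^ (2 * s - 1) * (X * (X ^ 2 + y ^ 2 + θ) ^ (-3 / 2 : ℝ)) -
            y ^ (2 * s) * (3 * X * y * (X ^ 2 + y ^ 2 + θ) ^ (-5 / 2 : ℝ)))) y := by
  have hsq : HasDerivAt (fun η : ℝ => X ^ 2 + η ^ 2 + θ) (2 * y) y := by
    simpa using ((hasDerivAt_pow 2 y).const_add (X ^ 2)).add_const θ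
  have hpow : ∀ q : ℝ, HasDerivAt (fun η : ℝ => X * (X ^ 2 + η ^ 2 + θ) ^ q)
      (X * (2 * y * q * (X ^ 2 + y ^ 2 + θ) ^ (q - 1))) y := fun q =>
    (hsq.rpow_const (.inl hN.ne')).const_mul X
  refine ((hpow (-1 / 2)).sub (((Real.hasDerivAt_rpow_const (.inl hy)).mul
    (hpow (-3 / 2))).const_mul ((1 - s) / 5 * θ ^ (1 - s)))).congr_deriv ?_
  rw [show (-1 / 2 - 1 : ℝ) = -3 / 2 by norm_num, show (-3 / 2 - 1 : ℝ) = -5 / 2 by norm_num]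
  ring

lemma tendsto_rpow_mul_deriv_barrierProfile (hs : s < 1) (hX : X ≠ 0) (hθ : 0 ≤ θ) :
    Tendsto (fun y => y ^ (1 - 2 * s) * deriv (barrierProfile s θ X) y) (𝓝[>] 0)
      (𝓝 (-(2 * s * (1 - s) / 5 * θ ^ (1 - s) * (X * (X ^ 2 + θ) ^ (-3 / 2 : ℝ))))) := by
  have hN : ∀ y, 0 < X ^ 2 + y ^ 2 + θ := fun y => by positivity
  have hcont : Continuous fun y : ℝ =>
      -(X * y ^ (2 - 2 * s) * (X ^ 2 + y ^ 2 + θ) ^ (-3 / 2 : ℝ)) -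
        (1 - s) / 5 * θ ^ (1 - s) * (2 * s * (X * (X ^ 2 + y ^ 2 + θ) ^ (-3 / 2 : ℝ)) -
          3 * X * y ^ 2 * (X ^ 2 + y ^ 2 + θ) ^ (-5 / 2 : ℝ)) := by
    have hNpow : ∀ q : ℝ, Continuous fun y : ℝ => (X ^ 2 + y ^ 2 + θ) ^ q := fun q =>
      Continuous.rpow_const (by fun_prop) fun y => .inl (hN y).ne'
    have hypow : Continuous fun y : ℝ => y ^ (2 - 2 * s) :=
      Real.continuous_rpow_const (by linarith)
    have := hNpow (-3 / 2)
    have := hNpow (-5 / 2)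
    fun_prop
  have hlim := (hcont.tendsto 0).mono_left (nhdsWithin_le_nhds (s := Ioi 0))
  rw [Real.zero_rpow (by linarith)] at hlim
  refine (hlim.congr' ?_).trans_eq ?_
  · filter_upwards [self_mem_nhdsWithin] with y hy
    rw [(hasDerivAt_barrierProfile (hN y) (ne_of_gt hy)).deriv,
      show (2 - 2 * s : ℝ) = 1 - 2 * s + 1 by ring, Real.rpow_add_one (ne_of_gt hy),
      Real.rpow_sub hy 1, Real.rpow_sub_one (ne_of_gt hy), Real.rpow_one]
    have := (Real.rpow_pos_of_pos hy (2 * s)).ne'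
    have hy0 : y ≠ 0 := ne_of_gt hy
    field_simp
  · simp only [ne_eq, OfNat.ofNat_ne_zero, not_false_eq_true, zero_pow, add_zero, mul_zero,
      zero_mul, sub_zero]
    congr 1
    ring

/-- The regularization parameter of the barrier at time `t₀ + τ`. It solves
`θ' = (2s(1 - s) / 5) θ ^ (1 - s)`, so that the time derivative of the barrier is half of its
conormal derivative. -/
def barrierScale (s τ : ℝ) : ℝ := (2 * s ^ 2 * (1 - s) / 5 * τ) ^ (1 / s)

lemma barrierScale_pos (hs : s ∈ Ioo (0 : ℝ) 1) {τ : ℝ} (hτ : 0 < τ) : 0 < barrierScale s τ := by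
  have := hs.1
  have := sub_pos.2 hs.2
  unfold barrierScale
  positivity

lemma barrierScale_zero (hs : 0 < s) : barrierScale s 0 = 0 := by
  rw [barrierScale, mul_zero, Real.zero_rpow (one_div_pos.2 hs).ne']

lemma barrierScale_nonneg (hs : s ∈ Ioo (0 : ℝ) 1) {τ : ℝ} (hτ : 0 ≤ τ) : 0 ≤ barrierScale s τ := by
  rcases hτ.eq_or_lt with rfl | hτ
  · exact (barrierScale_zero hs.1).ge
  · exact (barrierScale_pos hs hτ).le

lemma continuous_barrierScale (hs : 0 < s) : Continuous (barrierScale s) :=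
  (Real.continuous_rpow_const (one_div_pos.2 hs).le).comp (continuous_const.mul continuous_id)

lemma hasDerivAt_barrierScale (hs : s ∈ Ioo (0 : ℝ) 1) {τ : ℝ} (hτ : 0 < τ) :
    HasDerivAt (barrierScale s) (2 * s * (1 - s) / 5 * barrierScale s τ ^ (1 - s)) τ := by
  have hs0 := hs.1
  have hs1 := sub_pos.2 hs.2
  have hpos : 0 < 2 * s ^ 2 * (1 - s) / 5 * τ := by positivity
  have hlin : HasDerivAt (fun τ => 2 * s ^ 2 * (1 - s) / 5 * τ) (2 * s ^ 2 * (1 - s) / 5) τ := by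
    simpa using (hasDerivAt_id τ).const_mul (2 * s ^ 2 * (1 - s) / 5)
  refine (hlin.rpow_const (p := 1 / s) (.inl hpos.ne')).congr_deriv ?_
  rw [barrierScale, ← Real.rpow_mul hpos.le, show 1 / s * (1 - s) = 1 / s - 1 by field_simp]
  field_simp

lemma hasDerivAt_barrierProfile_barrierScale (hs : s ∈ Ioo (0 : ℝ) 1) (hX : X ≠ 0) {τ : ℝ}
    (hτ : 0 < τ) :
    HasDerivAt (fun τ => barrierProfile s (barrierScale s τ) X 0)
      (-(s * (1 - s) / 5 * barrierScale s τ ^ (1 - s) *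
        (X * (X ^ 2 + barrierScale s τ) ^ (-3 / 2 : ℝ)))) τ := by
  have hθ := barrierScale_pos hs hτ
  simp only [barrierProfile_base hs.1]
  refine ((((hasDerivAt_barrierScale hs hτ).const_add (X ^ 2)).rpow_const (p := -1 / 2)
    (.inl (by positivity))).const_mul X).congr_deriv ?_
  rw [show (-1 / 2 - 1 : ℝ) = -3 / 2 by norm_num]
  ring

lemma continuousAt_barrierProfile (hs : s ∈ Ioo (0 : ℝ) 1) (hX : X ≠ 0) (hθ : 0 ≤ θ) (y : ℝ) :
    ContinuousAt (fun q : ℝ × ℝ × ℝ => barrierProfile s q.1 q.2.1 q.2.2) (θ, X, y) := by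
  have hN : X ^ 2 + y ^ 2 + θ ≠ 0 := by positivity
  have hpow : ∀ q : ℝ, ContinuousAt
      (fun z : ℝ × ℝ × ℝ => (z.2.1 ^ 2 + z.2.2 ^ 2 + z.1) ^ q) (θ, X, y) := fun q =>
    ContinuousAt.rpow_const (by fun_prop) (.inl hN)
  have hθpow : ContinuousAt (fun z : ℝ × ℝ × ℝ => z.1 ^ (1 - s)) (θ, X, y) :=
    (Real.continuous_rpow_const (sub_pos.2 hs.2).le).continuousAt.comp continuousAt_fst
  have hypow : ContinuousAt (fun z : ℝ × ℝ × ℝ => z.2.2 ^ (2 * s)) (θ, X, y) :=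
    ((Real.continuous_rpow_const (by linarith [hs.1])).comp
      (continuous_snd.comp continuous_snd)).continuousAt
  have hXat : ContinuousAt (fun z : ℝ × ℝ × ℝ => z.2.1) (θ, X, y) := by fun_prop
  exact (hXat.mul (hpow (-1 / 2))).sub
    ((continuousAt_const.mul hθpow).mul (hypow.mul (hXat.mul (hpow (-3 / 2)))))

/-- The barrier for odd solutions: the quadratic corrections make it a strict supersolution and at
least `1` on the lateral boundary of a cylinder of radius `ρ` centred at height `y₀`, once
`‖x‖ ^ 2 / ρ ^ 4` is added. -/
def barrier (n : ℕ) (s ρ y₀ θ X y : ℝ) : ℝ :=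
  barrierProfile s θ X y + ((n + 9) / ρ ^ 4 * (ρ * X - X ^ 2) + (y ^ 2 - y₀ ^ 2) ^ 2 / ρ ^ 4)

variable {n : ℕ} {ρ y₀ : ℝ}

lemma hasAxialLaplacianAt_barrier_correction (b B G ρ y₀ X : ℝ) (hy : y ≠ 0) :
    HasAxialLaplacianAt b (fun ξ η => B * (ρ * ξ - ξ ^ 2) + (η ^ 2 - y₀ ^ 2) ^ 2 / G)
      (-2 * B + ((12 + 4 * b) * y ^ 2 - 4 * (1 + b) * y₀ ^ 2) / G) X y := by
  refine ⟨fun ξ => B * (ρ - 2 * ξ), fun η => 4 * η * (η ^ 2 - y₀ ^ 2) / G, -2 * B,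
    (12 * y ^ 2 - 4 * y₀ ^ 2) / G, .of_forall (fun ξ => ?_) ?_, .of_forall (fun η => ?_) ?_, ?_⟩
  · refine (((((hasDerivAt_id ξ).const_mul ρ).sub (hasDerivAt_pow 2 ξ)).const_mul B).add_const
      ((y ^ 2 - y₀ ^ 2) ^ 2 / G)).congr_deriv ?_
    norm_num
  · exact ((((hasDerivAt_id X).const_mul 2).const_sub ρ).const_mul B).congr_deriv (by ring)
  · refine (((((hasDerivAt_pow 2 η).sub_const (y₀ ^ 2)).pow 2).div_const G).const_add
      (B * (ρ * X - X ^ 2))).congr_deriv ?_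
    norm_num
    ring
  · exact ((((hasDerivAt_id y).const_mul 4).mul ((hasDerivAt_pow 2 y).sub_const
      (y₀ ^ 2))).div_const G).congr_deriv (by norm_num; ring)
  · field_simp
    ring

lemma exists_hasAxialLaplacianAt_barrier_neg (n : ℕ) (hs : s ∈ Ioo (0 : ℝ) 1) (hθ : 0 ≤ θ)
    (hX : 0 ≤ X) (hy : 0 < y) (hy₁ : y ≤ 1) (hρ : 0 < ρ) (y₀ : ℝ) :
    ∃ ℓ, HasAxialLaplacianAt (1 - 2 * s) (barrier n s ρ y₀ θ) ℓ X y ∧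
      ℓ + 2 * n * (1 / ρ ^ 4) < 0 := by
  obtain ⟨ℓ, hℓ, hlap⟩ := exists_hasAxialLaplacianAt_barrierProfile_nonpos hs hθ hX hy
  refine ⟨_, hlap.add (hasAxialLaplacianAt_barrier_correction _ _ _ _ _ _ hy.ne'), ?_⟩
  have hquad : (12 + 4 * (1 - 2 * s)) * y ^ 2 - 4 * (1 + (1 - 2 * s)) * y₀ ^ 2 ≤ 16 := by
    have hy2 : y ^ 2 ≤ 1 := pow_le_one₀ hy.le hy₁
    nlinarith [hs.1, hs.2, mul_nonneg (sub_nonneg.2 hs.2.le) (sq_nonneg y₀),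
      mul_nonneg hs.1.le (sq_nonneg y)]
  have hG : 0 < 1 / ρ ^ 4 := by positivity
  have hcorr : -2 * ((n + 9) / ρ ^ 4) + ((12 + 4 * (1 - 2 * s)) * y ^ 2 -
      4 * (1 + (1 - 2 * s)) * y₀ ^ 2) / ρ ^ 4 + 2 * n * (1 / ρ ^ 4) =
      ((12 + 4 * (1 - 2 * s)) * y ^ 2 - 4 * (1 + (1 - 2 * s)) * y₀ ^ 2 - 18) * (1 / ρ ^ 4) := by
    ring
  linarith [mul_neg_of_neg_of_pos (show (12 + 4 * (1 - 2 * s)) * y ^ 2 -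
    4 * (1 + (1 - 2 * s)) * y₀ ^ 2 - 18 < 0 by linarith) hG]

lemma hasDerivAt_barrier (n : ℕ) (hN : 0 < X ^ 2 + y ^ 2 + θ) (hy : y ≠ 0) (ρ y₀ : ℝ) :
    HasDerivAt (barrier n s ρ y₀ θ X)
      (deriv (barrierProfile s θ X) y + 4 * y * (y ^ 2 - y₀ ^ 2) / ρ ^ 4) y := by
  refine ((hasDerivAt_barrierProfile hN hy).differentiableAt.hasDerivAt.add
    (((((hasDerivAt_pow 2 y).sub_const (y₀ ^ 2)).pow 2).div_const (ρ ^ 4)).const_add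
      ((n + 9) / ρ ^ 4 * (ρ * X - X ^ 2)))).congr_deriv ?_
  norm_num
  ring

lemma tendsto_rpow_mul_deriv_barrier (n : ℕ) (hs : s < 1) (hX : X ≠ 0) (hθ : 0 ≤ θ) (ρ y₀ : ℝ) :
    Tendsto (fun y => y ^ (1 - 2 * s) * deriv (barrier n s ρ y₀ θ X) y) (𝓝[>] 0)
      (𝓝 (-(2 * s * (1 - s) / 5 * θ ^ (1 - s) * (X * (X ^ 2 + θ) ^ (-3 / 2 : ℝ))))) := by
  have hcont : Continuous fun y : ℝ => y ^ (2 - 2 * s) * (4 * (y ^ 2 - y₀ ^ 2) / ρ ^ 4) :=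
    (Real.continuous_rpow_const (by linarith)).mul (by fun_prop)
  have hcorr := (hcont.tendsto 0).mono_left (nhdsWithin_le_nhds (s := Ioi 0))
  rw [Real.zero_rpow (by linarith), zero_mul] at hcorr
  have hlim := (tendsto_rpow_mul_deriv_barrierProfile hs hX hθ).add hcorr
  rw [add_zero] at hlim
  refine hlim.congr' ?_
  filter_upwards [self_mem_nhdsWithin] with y hy
  rw [(hasDerivAt_barrier n (by positivity) (ne_of_gt hy) ρ y₀).deriv,
    show (2 - 2 * s : ℝ) = 1 - 2 * s + 1 by ring, Real.rpow_add_one (ne_of_gt hy)]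
  ring

end Barrier

section Comparison

lemma exists_forall_sub_le_of_lt {Z : Type*} [TopologicalSpace Z] [T2Space Z] {K : Set Z}
    {f g : Z → ℝ} {q₀ : Z} (hK : IsCompact K) (hf : ContinuousOn f K)
    (hg : ContinuousOn g (K ∩ {q | 0 < f q})) (hg₀ : ∀ q ∈ K, 0 ≤ g q) (hq₀ : q₀ ∈ K)
    (hlt : g q₀ < f q₀) :
    ∃ q ∈ K, g q < f q ∧ ∀ q' ∈ K, f q' - g q' ≤ f q - g q := by
  have hK' : IsCompact (K ∩ f ⁻¹' Ici (f q₀ - g q₀)) :=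
    hK.of_isClosed_subset (hf.preimage_isClosed_of_isClosed hK.isClosed isClosed_Ici)
      inter_subset_left
  have hsub : K ∩ f ⁻¹' Ici (f q₀ - g q₀) ⊆ K ∩ {q | 0 < f q} := fun q hq =>
    ⟨hq.1, (sub_pos.2 hlt).trans_le hq.2⟩
  obtain ⟨q, hq, hmax⟩ := hK'.exists_isMaxOn ⟨q₀, hq₀, sub_le_self _ (hg₀ q₀ hq₀)⟩
    ((hf.mono inter_subset_left).sub (hg.mono hsub))
  have hq₀q : f q₀ - g q₀ ≤ f q - g q := hmax ⟨hq₀, sub_le_self _ (hg₀ q₀ hq₀)⟩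
  refine ⟨q, hq.1, by linarith, fun q' hq' => ?_⟩
  by_cases h : f q₀ - g q₀ ≤ f q'
  · exact hmax ⟨hq', h⟩
  · linarith [hg₀ q' hq']

variable {n : ℕ} {s ρ y₀ t₁ t₀ t y : ℝ} {e x : En n} {p : En n × ℝ}

/-- The half-cylinder `‖x‖ ≤ ρ`, `x · e ≥ 0`, `|y - y₀| ≤ ρ`, cut off at `y = 0`, on which odd
solutions are compared with the barrier. -/
def barrierBox (e : En n) (ρ y₀ : ℝ) : Set (En n × ℝ) :=
  {p | ‖p.1‖ ≤ ρ ∧ 0 ≤ ⟪e, p.1⟫ ∧ p.2 ∈ Icc (max 0 (y₀ - ρ)) (y₀ + ρ)}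

lemma isCompact_barrierBox (e : En n) (ρ y₀ : ℝ) : IsCompact (barrierBox e ρ y₀) := by
  refine ((isCompact_closedBall (0 : En n) ρ).prod
    (isCompact_Icc (a := max 0 (y₀ - ρ)) (b := y₀ + ρ))).of_isClosed_subset ?_
    fun p hp => ⟨mem_closedBall_zero_iff.2 hp.1, hp.2.2⟩
  have hX : IsClosed {p : En n × ℝ | 0 ≤ ⟪e, p.1⟫} :=
    isClosed_le continuous_const (continuous_const.inner continuous_fst)
  exact (isClosed_le continuous_fst.norm continuous_const).inter
    (hX.inter (isClosed_Icc.preimage continuous_snd))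

lemma barrierBox_subset_halfCylinderWithBase {R S : ℝ} (hR : ρ < R) (hS : y₀ + ρ < S) :
    barrierBox e ρ y₀ ⊆ halfCylinderWithBase n R S := fun _ hp =>
  ⟨hp.1.trans_lt hR, (le_max_left _ _).trans hp.2.2.1, hp.2.2.2.trans_lt hS⟩

lemma barrierBox_mem_nhds (hx : ‖p.1‖ < ρ) (hX : 0 < ⟪e, p.1⟫) (hp : 0 < p.2)
    (hy : |p.2 - y₀| < ρ) : barrierBox e ρ y₀ ∈ 𝓝 p := by
  obtain ⟨hlow, hhigh⟩ := abs_lt.1 hy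
  filter_upwards [continuousAt_fst.norm.eventually_lt continuousAt_const hx,
    continuousAt_const.eventually_lt (continuousAt_const.inner continuousAt_fst) hX,
    continuousAt_const.eventually_lt continuousAt_snd
      (show max 0 (y₀ - ρ) < p.2 from max_lt hp (by linarith)),
    continuousAt_snd.eventually_lt continuousAt_const (show p.2 < y₀ + ρ by linarith)]
    with z h₁ h₂ h₃ h₄
  exact ⟨h₁.le, h₂.le, h₃.le, h₄.le⟩

/-- The barrier as a function of `(t, (x, y))`, odd in the direction `e` up to its quadratic
corrections, and starting at time `t₁`. -/
def oddBarrier (s ρ y₀ t₁ : ℝ) (e : En n) (t : ℝ) (p : En n × ℝ) : ℝ :=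
  barrier n s ρ y₀ (barrierScale s (t - t₁)) ⟪e, p.1⟫ p.2 + 1 / ρ ^ 4 * ‖p.1‖ ^ 2

lemma continuousAt_oddBarrier (hs : s ∈ Ioo (0 : ℝ) 1) (ρ y₀ : ℝ) (ht : t₁ ≤ t)
    (hX : ⟪e, p.1⟫ ≠ 0) :
    ContinuousAt (fun q : ℝ × (En n × ℝ) => oddBarrier s ρ y₀ t₁ e q.1 q.2) (t, p) := by
  have hθ : Continuous fun q : ℝ × (En n × ℝ) => barrierScale s (q.1 - t₁) :=
    (continuous_barrierScale hs.1).comp (by fun_prop)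
  have hprofile : ContinuousAt (fun q : ℝ × (En n × ℝ) =>
      barrierProfile s (barrierScale s (q.1 - t₁)) ⟪e, q.2.1⟫ q.2.2) (t, p) :=
    ContinuousAt.comp_of_eq (f := fun q : ℝ × (En n × ℝ) =>
        (barrierScale s (q.1 - t₁), ⟪e, q.2.1⟫, q.2.2))
      (continuousAt_barrierProfile hs hX (barrierScale_nonneg hs (sub_nonneg.2 ht)) p.2)
      (hθ.prodMk (by fun_prop)).continuousAt rfl
  unfold oddBarrier barrier
  fun_prop

lemma hasDerivAt_oddBarrier_vertical (ρ y₀ : ℝ) (hX : ⟪e, x⟫ ≠ 0)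
    (hθ : 0 ≤ barrierScale s (t - t₁)) (hy : y ≠ 0) :
    HasDerivAt (fun y => oddBarrier s ρ y₀ t₁ e t (x, y))
      (deriv (barrier n s ρ y₀ (barrierScale s (t - t₁)) ⟪e, x⟫) y) y := by
  have hN : 0 < ⟪e, x⟫ ^ 2 + y ^ 2 + barrierScale s (t - t₁) := by positivity
  exact (hasDerivAt_barrier n hN hy ρ y₀).differentiableAt.hasDerivAt.add_const
    (1 / ρ ^ 4 * ‖x‖ ^ 2)

lemma quadratic_correction_nonneg (he : ‖e‖ = 1) (hp : p ∈ barrierBox e ρ y₀) :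
    0 ≤ ((n : ℝ) + 9) / ρ ^ 4 * (ρ * ⟪e, p.1⟫ - ⟪e, p.1⟫ ^ 2) := by
  have hX : ⟪e, p.1⟫ ≤ ρ := by
    have := real_inner_le_norm e p.1
    rw [he, one_mul] at this
    exact this.trans hp.1
  have : 0 ≤ ρ * ⟪e, p.1⟫ - ⟪e, p.1⟫ ^ 2 := by nlinarith [hp.2.1]
  positivity

lemma le_oddBarrier_of_mem (s t₁ t : ℝ) (he : ‖e‖ = 1) (hp : p ∈ barrierBox e ρ y₀) :
    barrierProfile s (barrierScale s (t - t₁)) ⟪e, p.1⟫ p.2 +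
      (p.2 ^ 2 - y₀ ^ 2) ^ 2 / ρ ^ 4 + 1 / ρ ^ 4 * ‖p.1‖ ^ 2 ≤ oddBarrier s ρ y₀ t₁ e t p := by
  rw [oddBarrier, barrier]
  linarith [quadratic_correction_nonneg he hp]

lemma oddBarrier_nonneg (hs : s ∈ Ioo (0 : ℝ) 1) (he : ‖e‖ = 1) (ht : t₁ ≤ t)
    (hp : p ∈ barrierBox e ρ y₀) : 0 ≤ oddBarrier s ρ y₀ t₁ e t p := by
  have h := barrierProfile_nonneg hs (barrierScale_nonneg hs (sub_nonneg.2 ht)) hp.2.1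
    ((le_max_left _ _).trans hp.2.2.1)
  refine le_trans ?_ (le_oddBarrier_of_mem s t₁ t he hp)
  positivity

lemma one_le_oddBarrier_of_norm_eq (hs : s ∈ Ioo (0 : ℝ) 1) (he : ‖e‖ = 1) (ht : t₁ ≤ t)
    (hρ : 0 < ρ) (hρ₁ : ρ ≤ 1) (hp : p ∈ barrierBox e ρ y₀) (hx : ‖p.1‖ = ρ) :
    1 ≤ oddBarrier s ρ y₀ t₁ e t p := by
  have h := barrierProfile_nonneg hs (barrierScale_nonneg hs (sub_nonneg.2 ht)) hp.2.1
    ((le_max_left _ _).trans hp.2.2.1)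
  have hside : 1 ≤ 1 / ρ ^ 4 * ‖p.1‖ ^ 2 := by
    rw [hx, div_mul_eq_mul_div, one_mul, one_le_div (by positivity)]
    exact pow_le_pow_of_le_one hρ.le hρ₁ (by norm_num)
  have hheight : 0 ≤ (p.2 ^ 2 - y₀ ^ 2) ^ 2 / ρ ^ 4 := by positivity
  linarith [le_oddBarrier_of_mem s t₁ t he hp]

lemma one_le_oddBarrier_of_abs_eq (hs : s ∈ Ioo (0 : ℝ) 1) (he : ‖e‖ = 1) (ht : t₁ ≤ t)
    (hρ : 0 < ρ) (hy₀ : 0 ≤ y₀) (hp : p ∈ barrierBox e ρ y₀) (hy : |p.2 - y₀| = ρ) :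
    1 ≤ oddBarrier s ρ y₀ t₁ e t p := by
  have hp₂ : 0 ≤ p.2 := (le_max_left _ _).trans hp.2.2.1
  have h := barrierProfile_nonneg hs (barrierScale_nonneg hs (sub_nonneg.2 ht)) hp.2.1 hp₂
  have hheight : 1 ≤ (p.2 ^ 2 - y₀ ^ 2) ^ 2 / ρ ^ 4 := by
    have hsum : ρ ≤ p.2 + y₀ := hy ▸ abs_le.2 ⟨by linarith, by linarith⟩
    rw [one_le_div (by positivity)]
    calc ρ ^ 4 = |p.2 - y₀| ^ 2 * ρ ^ 2 := by rw [hy]; ring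
      _ ≤ |p.2 - y₀| ^ 2 * (p.2 + y₀) ^ 2 := by gcongr
      _ = (p.2 ^ 2 - y₀ ^ 2) ^ 2 := by rw [sq_abs]; ring
  have hside : 0 ≤ 1 / ρ ^ 4 * ‖p.1‖ ^ 2 := by positivity
  linarith [le_oddBarrier_of_mem s t₁ t he hp]

lemma norm_lt_and_abs_sub_lt_of_oddBarrier_lt_one (hs : s ∈ Ioo (0 : ℝ) 1) (he : ‖e‖ = 1)
    (ht : t₁ ≤ t) (hρ : 0 < ρ) (hρ₁ : ρ ≤ 1) (hy₀ : 0 ≤ y₀) (hp : p ∈ barrierBox e ρ y₀)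
    (hlt : oddBarrier s ρ y₀ t₁ e t p < 1) : ‖p.1‖ < ρ ∧ |p.2 - y₀| < ρ := by
  refine ⟨hp.1.lt_of_ne fun h => hlt.not_ge (one_le_oddBarrier_of_norm_eq hs he ht hρ hρ₁ hp h),
    lt_of_le_of_ne (abs_le.2 ⟨?_, ?_⟩) fun h =>
      hlt.not_ge (one_le_oddBarrier_of_abs_eq hs he ht hρ hy₀ hp h)⟩
  · linarith [(le_max_right _ _).trans hp.2.2.1]
  · linarith [hp.2.2.2]

lemma one_le_oddBarrier_initial (hs : s ∈ Ioo (0 : ℝ) 1) (he : ‖e‖ = 1)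
    (hp : p ∈ barrierBox e ρ y₀) (hX : 0 < ⟪e, p.1⟫) (hy : p.2 = 0) :
    1 ≤ oddBarrier s ρ y₀ t₁ e t₁ p := by
  have h := le_oddBarrier_of_mem s t₁ t₁ he hp
  rw [sub_self, barrierScale_zero hs.1, hy, barrierProfile_zero_base hs.1 hX] at h
  refine le_trans ?_ h
  rw [add_assoc]
  exact le_add_of_nonneg_right (by positivity)

namespace IsCylinderSolution

variable {a R S : ℝ} {u w : ℝ → En n × ℝ → ℝ}

lemma continuousWithinAt_vertical (hu : IsCylinderSolution a R S u) (hS : 0 < S)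
    (ht : t ∈ Icc (-S) 0) (hx : ‖x‖ < R) :
    ContinuousWithinAt (fun y => u t (x, y)) (Ici 0) 0 := by
  have hIco : ContinuousWithinAt (fun y => u t (x, y)) (Ico 0 S) 0 :=
    (hu.continuousOn.comp (f := fun y : ℝ => (t, (x, y))) (by fun_prop)
      fun y hy => ⟨ht, hx, hy⟩) 0 ⟨le_rfl, hS⟩
  exact hIco.mono_of_mem_nhdsWithin (Ico_mem_nhdsGE hS)

lemma hasDerivAt_vertical (hu : IsCylinderSolution a R S u) (ht : t ∈ Icc (-S) 0) (hx : ‖x‖ < R)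
    (hy : y ∈ Ioo 0 S) : HasDerivAt (fun y => u t (x, y)) (fderiv ℝ (u t) (x, y) (0, 1)) y :=
  ((hu.aHarmonic t ht).differentiableAt (isOpen_halfCylinder R S)
    (p := (x, y)) ⟨hx, hy⟩).hasFDerivAt.comp_hasDerivAt y
      ((hasDerivAt_const y x).prodMk (hasDerivAt_id y))

lemma not_isLocalMax_sub_oddBarrier (hw : IsCylinderSolution (1 - 2 * s) R S w)
    (hs : s ∈ Ioo (0 : ℝ) 1) (he : ‖e‖ = 1) (ht : t ∈ Icc (-S) 0) (ht₁ : t₁ ≤ t) (hρ : 0 < ρ)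
    (hS : S ≤ 1) (hp : p ∈ halfCylinder n R S) (hX : 0 ≤ ⟪e, p.1⟫) :
    ¬ IsLocalMax (fun q => w t q - oddBarrier s ρ y₀ t₁ e t q) p := by
  intro hmax
  obtain ⟨ℓ, hℓ, hneg⟩ := exists_hasAxialLaplacianAt_barrier_neg n hs
    (barrierScale_nonneg hs (sub_nonneg.2 ht₁)) hX hp.2.1 (hp.2.2.le.trans hS) hρ y₀
  have := (hw.aHarmonic t ht).nonneg_of_isLocalMax_sub (isOpen_halfCylinder R S) hp he hℓ hmax
  linarith

lemma not_forall_sub_oddBarrier_le_of_base (hw : IsCylinderSolution (1 - 2 * s) R S w)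
    (hs : s ∈ Ioo (0 : ℝ) 1) (ht₁S : -S ≤ t₁) (ht₁ : t₁ < t) (ht : t ≤ 0)
    (hx : ‖x‖ < R) (hX : 0 < ⟪e, x⟫)
    (htime : ∀ τ ∈ Icc t₁ t, w τ (x, 0) - oddBarrier s ρ y₀ t₁ e τ (x, 0) ≤
      w t (x, 0) - oddBarrier s ρ y₀ t₁ e t (x, 0)) :
    ¬ ∀ᶠ y in 𝓝[>] (0 : ℝ), w t (x, y) - oddBarrier s ρ y₀ t₁ e t (x, y) ≤
      w t (x, 0) - oddBarrier s ρ y₀ t₁ e t (x, 0) := by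
  intro hvert
  have hτ : 0 < t - t₁ := sub_pos.2 ht₁
  have hS : 0 < S := by linarith
  have htS : t ∈ Ioc (-S) 0 := ⟨by linarith, ht⟩
  have hθ := barrierScale_pos hs hτ
  obtain ⟨L, hL, hlim⟩ := hw.boundary t htS x hx
  have hΨ : HasDerivAt (fun τ => oddBarrier s ρ y₀ t₁ e τ (x, 0)) _ t :=
    (((hasDerivAt_barrierProfile_barrierScale hs hX.ne' hτ).comp_sub_const t t₁).add_const
      _).add_const _
  have h₁ := nonneg_of_hasDerivWithinAt_of_forall_le ht₁
    ((hL.mono (Icc_subset_Icc ht₁S ht)).sub hΨ.hasDerivWithinAt) htime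
  have hcont : ContinuousWithinAt (fun y => oddBarrier s ρ y₀ t₁ e t (x, y)) (Ici 0) 0 :=
    ((continuousAt_oddBarrier hs ρ y₀ ht₁.le hX.ne').comp_of_eq
      (f := fun y : ℝ => (t, (x, y))) (by fun_prop) rfl).continuousWithinAt
  have hderiv : ∀ᶠ y in 𝓝[>] (0 : ℝ), HasDerivAt
      (fun y => w t (x, y) - oddBarrier s ρ y₀ t₁ e t (x, y))
      (fderiv ℝ (w t) (x, y) (0, 1) -
        deriv (barrier n s ρ y₀ (barrierScale s (t - t₁)) ⟪e, x⟫) y) y := by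
    filter_upwards [Ioo_mem_nhdsGT hS] with y hy
    exact (hw.hasDerivAt_vertical (Ioc_subset_Icc_self htS) hx hy).sub
      (hasDerivAt_oddBarrier_vertical ρ y₀ hX.ne' hθ.le hy.1.ne')
  have h₂ := nonpos_of_tendsto_rpow_mul_deriv_of_le
    ((hw.continuousWithinAt_vertical hS (Ioc_subset_Icc_self htS) hx).sub hcont) hderiv
    ((hlim.sub (tendsto_rpow_mul_deriv_barrier n hs.2 hX.ne' hθ.le ρ y₀)).congr
      fun y => (mul_sub _ _ _).symm) hvert
  have hpos : 0 < s * (1 - s) / 5 * barrierScale s (t - t₁) ^ (1 - s) *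
      (⟪e, x⟫ * (⟪e, x⟫ ^ 2 + barrierScale s (t - t₁)) ^ (-3 / 2 : ℝ)) := by
    have := hs.1
    have := sub_pos.2 hs.2
    positivity
  linarith

lemma not_forall_sub_oddBarrier_le (hw : IsCylinderSolution (1 - 2 * s) R S w)
    (hs : s ∈ Ioo (0 : ℝ) 1) (he : ‖e‖ = 1) (hρ : 0 < ρ) (hρR : ρ < R) (hρ₁ : ρ ≤ 1) (hS : S ≤ 1)
    (hy₀ : 0 ≤ y₀) (hyS : y₀ + ρ < S) (ht₁S : -S ≤ t₁) (ht₀ : t₀ ≤ 0)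
    (hbound : ∀ t ∈ Icc (-S) 0, ∀ p ∈ barrierBox e ρ y₀, w t p ≤ 1) (ht : t ∈ Icc t₁ t₀)
    (hp : p ∈ barrierBox e ρ y₀) (hX : 0 < ⟪e, p.1⟫) (hlt : oddBarrier s ρ y₀ t₁ e t p < w t p) :
    ¬ ∀ z ∈ Icc t₁ t₀ ×ˢ barrierBox e ρ y₀,
      w z.1 z.2 - oddBarrier s ρ y₀ t₁ e z.1 z.2 ≤ w t p - oddBarrier s ρ y₀ t₁ e t p := by
  intro hmax
  have htS : t ∈ Icc (-S) 0 := ⟨ht₁S.trans ht.1, ht.2.trans ht₀⟩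
  obtain ⟨hxR, hy₁, hy₂⟩ := barrierBox_subset_halfCylinderWithBase hρR hyS hp
  have hlt₁ := hlt.trans_le (hbound t htS p hp)
  obtain ⟨hside, hheight⟩ :=
    norm_lt_and_abs_sub_lt_of_oddBarrier_lt_one hs he ht.1 hρ hρ₁ hy₀ hp hlt₁
  obtain ⟨x, y⟩ := p
  rcases hy₁.eq_or_lt with rfl | hy
  · rcases ht.1.eq_or_lt with rfl | ht₁
    · exact hlt₁.not_ge (one_le_oddBarrier_initial hs he hp hX rfl)
    · refine hw.not_forall_sub_oddBarrier_le_of_base hs ht₁S ht₁ htS.2 hxR hX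
        (fun τ hτ => hmax (τ, (x, 0)) ⟨⟨hτ.1, hτ.2.trans ht.2⟩, hp⟩) ?_
      filter_upwards [Ioo_mem_nhdsGT (show 0 < y₀ + ρ by linarith)] with σ hσ
      exact hmax (t, (x, σ)) ⟨ht, hp.1, hp.2.1, hp.2.2.1.trans hσ.1.le, hσ.2.le⟩
  · refine hw.not_isLocalMax_sub_oddBarrier (y₀ := y₀) hs he htS ht.1 hρ hS
      ⟨hxR, hy, hy₂⟩ hX.le ?_
    filter_upwards [barrierBox_mem_nhds hside hX hy hheight] with z hz
    exact hmax (t, z) ⟨ht, hz⟩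

lemma le_oddBarrier (hw : IsCylinderSolution (1 - 2 * s) R S w) (hs : s ∈ Ioo (0 : ℝ) 1)
    (he : ‖e‖ = 1) (hρ : 0 < ρ) (hρR : ρ < R) (hS : S ≤ 1) (hy₀ : 0 ≤ y₀) (hyS : y₀ + ρ < S)
    (ht₀S : -S < t₀ - ρ) (ht₀ : t₀ ≤ 0)
    (hodd : ∀ t ∈ Icc (-S) 0, ∀ p ∈ barrierBox e ρ y₀, ⟪e, p.1⟫ = 0 → w t p = 0)
    (hbound : ∀ t ∈ Icc (-S) 0, ∀ p ∈ barrierBox e ρ y₀, w t p ≤ 1) (hp : p ∈ barrierBox e ρ y₀) :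
    w t₀ p ≤ oddBarrier s ρ y₀ (t₀ - ρ) e t₀ p := by
  by_contra! hlt
  have htS : Icc (t₀ - ρ) t₀ ⊆ Icc (-S) 0 := Icc_subset_Icc ht₀S.le ht₀
  have hX : ∀ {t q}, t ∈ Icc (t₀ - ρ) t₀ → q ∈ barrierBox e ρ y₀ → 0 < w t q → 0 < ⟪e, q.1⟫ :=
    fun {t q} ht hq hpos => hq.2.1.lt_of_ne fun h => hpos.ne' (hodd t (htS ht) q hq h.symm)
  obtain ⟨⟨t, q⟩, ⟨ht, hq⟩, hlt, hmax⟩ := exists_forall_sub_le_of_lt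
    (f := fun z : ℝ × (En n × ℝ) => w z.1 z.2)
    (g := fun z => oddBarrier s ρ y₀ (t₀ - ρ) e z.1 z.2) (q₀ := (t₀, p))
    (isCompact_Icc.prod (isCompact_barrierBox e ρ y₀))
    (hw.continuousOn.mono (prod_mono htS (barrierBox_subset_halfCylinderWithBase hρR hyS)))
    (fun z hz => (continuousAt_oddBarrier hs ρ y₀ hz.1.1.1
      (hX hz.1.1 hz.1.2 hz.2).ne').continuousWithinAt)
    (fun z hz => oddBarrier_nonneg hs he hz.1.1 hz.2)
    ⟨⟨by linarith, le_rfl⟩, hp⟩ hlt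
  exact hw.not_forall_sub_oddBarrier_le hs he hρ hρR (by linarith) hS hy₀ hyS ht₀S.le ht₀ hbound
    ht hq (hX ht hq ((oddBarrier_nonneg hs he ht.1 hq).trans_lt hlt)) hlt hmax

end IsCylinderSolution

end Comparison

section Lipschitz

variable {n : ℕ} {s ρ R S t y : ℝ} {e m x v : En n} {u : ℝ → En n × ℝ → ℝ}

/-- A Lipschitz constant in `x` for solutions of size `1 / 2`, at distance `ρ` from the parabolic
boundary. -/
def lipschitzConst (n : ℕ) (s ρ : ℝ) : ℝ :=
  (barrierScale s ρ ^ (-1 / 2 : ℝ) + (n + 9) / ρ ^ 3) / 2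

lemma oddBarrier_axis_le (hs : s ∈ Ioo (0 : ℝ) 1) (he : ‖e‖ = 1) (hρ : 0 < ρ) {X : ℝ} (hX : 0 ≤ X)
    (hy : 0 ≤ y) (t : ℝ) :
    oddBarrier s ρ y (t - ρ) e t (X • e, y) ≤ 2 * lipschitzConst n s ρ * X := by
  have hprofile := barrierProfile_le hs.2.le (barrierScale_pos hs hρ) hX hy
  have hcorr : ((n : ℝ) + 9) / ρ ^ 4 * (ρ * X - X ^ 2) + 1 / ρ ^ 4 * X ^ 2 ≤
      (n + 9) / ρ ^ 3 * X := by
    have : ((n : ℝ) + 9) / ρ ^ 4 * (ρ * X - X ^ 2) + 1 / ρ ^ 4 * X ^ 2 =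
        (n + 9) / ρ ^ 3 * X - (n + 8) / ρ ^ 4 * X ^ 2 := by
      field_simp
      ring
    rw [this]
    exact sub_le_self _ (by positivity)
  simp only [oddBarrier, barrier, sub_sub_cancel, inner_smul_right, real_inner_self_eq_norm_sq, he,
    one_pow, mul_one, norm_smul, Real.norm_eq_abs, sq_abs, sub_self, lipschitzConst,
    ne_eq, OfNat.ofNat_ne_zero, not_false_eq_true, zero_pow, zero_div, add_zero]
  linarith

lemma reflection_orthogonal_singleton_smul (c : ℝ) (e : En n) :
    (ℝ ∙ e)ᗮ.reflection (c • e) = -(c • e) := by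
  rw [map_smul, Submodule.reflection_orthogonalComplement_singleton_eq_neg, smul_neg]

lemma reflection_orthogonal_singleton_of_inner_eq_zero (h : ⟪e, x⟫ = 0) :
    (ℝ ∙ e)ᗮ.reflection x = x :=
  Submodule.reflection_mem_subspace_eq_self (Submodule.mem_orthogonal_singleton_iff_inner_right.2 h)

/-- The difference of `u` and its reflection in the hyperplane through `m` orthogonal to `e` is an
odd solution, to which the barrier applies. -/
lemma IsCylinderSolution.sub_reflection_le (hu : IsCylinderSolution (1 - 2 * s) R S u)
    (hs : s ∈ Ioo (0 : ℝ) 1) (hS : S ≤ 1) (hρ : 0 < ρ)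
    (hbound : ∀ t ∈ Icc (-S) 0, ∀ p ∈ halfCylinderWithBase n R S, |u t p| ≤ 1 / 2)
    (htS : -S < t - ρ) (ht : t ≤ 0) (he : ‖e‖ = 1) {X : ℝ} (hX : 0 ≤ X) (hXρ : X ≤ ρ)
    (hm : ‖m‖ + ρ < R) (hy : 0 ≤ y) (hyS : y + ρ < S) :
    u t (X • e + m, y) - u t (-(X • e) + m, y) ≤ 2 * lipschitzConst n s ρ * X := by
  have hw := (hu.comp_horizontalIsometry (.refl ℝ _) m).sub
    (hu.comp_horizontalIsometry (ℝ ∙ e)ᗮ.reflection m)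
  have hmem : ∀ (A : En n ≃ₗᵢ[ℝ] En n) {p}, p ∈ barrierBox e ρ y →
      horizontalIsometry A m p ∈ halfCylinderWithBase n R S := fun A p hp =>
    ⟨norm_add_lt_of_lt_sub_norm (by rw [A.norm_map]; linarith [hp.1]),
      (le_max_left _ _).trans hp.2.2.1, hp.2.2.2.trans_lt hyS⟩
  have hp : ((X • e, y) : En n × ℝ) ∈ barrierBox e ρ y := by
    refine ⟨?_, ?_, max_le hy (by linarith), by linarith⟩
    · rwa [norm_smul, he, mul_one, Real.norm_of_nonneg hX]
    · rw [inner_smul_right, real_inner_self_eq_norm_sq]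
      positivity
  have hle := hw.le_oddBarrier hs he hρ (by linarith) hS hy hyS htS ht
    (fun _ _ _ _ hX => by
      simp [horizontalIsometry, reflection_orthogonal_singleton_of_inner_eq_zero hX])
    (fun τ hτ p hp => by
      linarith [(abs_le.1 (hbound τ hτ _ (hmem (.refl ℝ _) hp))).2,
        (abs_le.1 (hbound τ hτ _ (hmem (ℝ ∙ e)ᗮ.reflection hp))).1]) hp
  simp only [horizontalIsometry, LinearIsometryEquiv.coe_refl, id,
    reflection_orthogonal_singleton_smul] at hle
  exact hle.trans (oddBarrier_axis_le hs he hρ hX hy t)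

lemma IsCylinderSolution.sub_le_lipschitzConst_mul (hu : IsCylinderSolution (1 - 2 * s) R S u)
    (hs : s ∈ Ioo (0 : ℝ) 1) (hS : S ≤ 1) (hρ : 0 < ρ)
    (hbound : ∀ t ∈ Icc (-S) 0, ∀ p ∈ halfCylinderWithBase n R S, |u t p| ≤ 1 / 2)
    (htS : -S < t - ρ) (ht : t ≤ 0) (hv : ‖v‖ ≤ 2 * ρ) (hx : ‖x + (2⁻¹ : ℝ) • v‖ + ρ < R)
    (hy : 0 ≤ y) (hyS : y + ρ < S) :
    u t (x + v, y) - u t (x, y) ≤ lipschitzConst n s ρ * ‖v‖ := by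
  rcases eq_or_ne v 0 with rfl | hv₀
  · simp
  have h := hu.sub_reflection_le hs hS hρ hbound htS ht (e := ‖v‖⁻¹ • v) (norm_smul_inv_norm hv₀)
    (X := ‖v‖ / 2) (by positivity) (by linarith) hx hy hyS
  have hhalf : (‖v‖ / 2) • ‖v‖⁻¹ • v = (2⁻¹ : ℝ) • v := by
    rw [smul_smul, div_mul_eq_mul_div, mul_inv_cancel₀ (norm_ne_zero_iff.2 hv₀), one_div]
  rw [hhalf, show (2⁻¹ : ℝ) • v + (x + (2⁻¹ : ℝ) • v) = x + v by module,
    neg_add_cancel_comm_assoc] at h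
  linarith

end Lipschitz

section HigherOrder

variable {n : ℕ} {s R S M t y δ : ℝ} {x v : En n} {u : ℝ → En n × ℝ → ℝ}

/-- A classical solution on a cylinder which is bounded by `M`. -/
structure IsBoundedCylinderSolution (a R S M : ℝ) (u : ℝ → En n × ℝ → ℝ) : Prop
    extends IsCylinderSolution a R S u where
  abs_apply_le : ∀ t ∈ Icc (-S) 0, ∀ p ∈ halfCylinderWithBase n R S, |u t p| ≤ M

namespace IsBoundedCylinderSolution

lemma sub_le_of_norm_le (hu : IsBoundedCylinderSolution (1 - 2 * s) R S M u)
    (hs : s ∈ Ioo (0 : ℝ) 1) (hS : S ≤ 1) (hδ : 0 < δ) (ht : t ∈ Icc (-S + δ) 0)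
    (hv : ‖v‖ ≤ δ) (hx : ‖x‖ < R - δ - ‖v‖) (hy : y ∈ Icc 0 (S - δ)) :
    u t (x + v, y) - u t (x, y) ≤ 2 * lipschitzConst n s (δ / 2) * M * ‖v‖ := by
  have hmem : ((x + v, y) : En n × ℝ) ∈ halfCylinderWithBase n R S :=
    ⟨by linarith [norm_add_le x v], hy.1, by linarith [hy.2]⟩
  have hM : 0 ≤ M := (abs_nonneg _).trans (hu.abs_apply_le t ⟨by linarith [ht.1], ht.2⟩ _ hmem)
  rcases hM.eq_or_lt with rfl | hM
  · have hzero : ∀ p ∈ halfCylinderWithBase n R S, u t p = 0 := fun p hp =>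
      abs_nonpos_iff.1 (hu.abs_apply_le t ⟨by linarith [ht.1], ht.2⟩ p hp)
    rw [hzero _ hmem, hzero (x, y) ⟨by linarith [norm_nonneg v], hy.1, by linarith [hy.2]⟩]
    simp
  · have h := (hu.const_mul (2 * M)⁻¹).sub_le_lipschitzConst_mul hs hS (half_pos hδ)
      (fun τ hτ p hp => by
        rw [abs_mul, abs_of_pos (by positivity), inv_mul_le_iff₀ (by positivity)]
        linarith [hu.abs_apply_le τ hτ p hp])
      (by linarith [ht.1]) ht.2 (v := v) (by linarith) (x := x)
      (by
        have := norm_add_le x ((2⁻¹ : ℝ) • v)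
        rw [norm_smul, Real.norm_of_nonneg (by norm_num)] at this
        linarith [norm_nonneg v]) hy.1 (by linarith [hy.2])
    rw [← mul_sub, inv_mul_le_iff₀ (by positivity)] at h
    linarith

lemma abs_sub_le (hu : IsBoundedCylinderSolution (1 - 2 * s) R S M u)
    (hs : s ∈ Ioo (0 : ℝ) 1) (hS : S ≤ 1) (hδ : 0 < δ) (ht : t ∈ Icc (-S + δ) 0)
    (hx : ‖x‖ < R - δ - ‖v‖) (hy : y ∈ Icc 0 (S - δ)) :
    |u t (x + v, y) - u t (x, y)| ≤ max (2 * lipschitzConst n s (δ / 2)) (2 / δ) * M * ‖v‖ := by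
  have htS : t ∈ Icc (-S) 0 := ⟨by linarith [ht.1], ht.2⟩
  have hxv := hu.abs_apply_le t htS (x + v, y)
    ⟨by linarith [norm_add_le x v], hy.1, by linarith [hy.2]⟩
  have hx₀ := hu.abs_apply_le t htS (x, y) ⟨by linarith [norm_nonneg v], hy.1, by linarith [hy.2]⟩
  have hM : 0 ≤ M := (abs_nonneg _).trans hx₀
  rcases le_or_gt ‖v‖ δ with hv | hv
  · have hneg : IsBoundedCylinderSolution (1 - 2 * s) R S M (fun t p => -1 * u t p) :=
      ⟨hu.const_mul (-1), fun t ht p hp => by simpa using hu.abs_apply_le t ht p hp⟩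
    have h₁ := hu.sub_le_of_norm_le hs hS hδ ht hv hx hy
    have h₂ := hneg.sub_le_of_norm_le hs hS hδ ht hv hx hy
    refine le_trans (abs_le.2 ⟨by linarith, h₁⟩) ?_
    gcongr
    exact le_max_left _ _
  · calc |u t (x + v, y) - u t (x, y)| ≤ M + M := (abs_sub _ _).trans (add_le_add hxv hx₀)
      _ = 2 / δ * M * δ := by field_simp; ring
      _ ≤ max (2 * lipschitzConst n s (δ / 2)) (2 / δ) * M * ‖v‖ := by
        gcongr
        exact le_max_right _ _

lemma diffQuot (hu : IsBoundedCylinderSolution (1 - 2 * s) R S M u) (hs : s ∈ Ioo (0 : ℝ) 1)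
    (hS : S ≤ 1) (hδ : 0 < δ) (v : En n) :
    IsBoundedCylinderSolution (1 - 2 * s) (R - δ - ‖v‖) (S - δ)
      (max (2 * lipschitzConst n s (δ / 2)) (2 / δ) * M)
      (fun t p => diffQuot v (fun x => u t (x, p.2)) p.1) where
  toIsCylinderSolution :=
    (hu.toIsCylinderSolution.diffQuot v).mono (by linarith) (by linarith)
  abs_apply_le t ht p hp := by
    have ht' : t ∈ Icc (-S + δ) 0 := ⟨by linarith [ht.1], ht.2⟩
    have hp₂ : p.2 ∈ Icc 0 (S - δ) := ⟨hp.2.1, hp.2.2.le⟩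
    have hmem : ((p.1, p.2) : En n × ℝ) ∈ halfCylinderWithBase n R S :=
      ⟨by linarith [hp.1, norm_nonneg v], hp₂.1, by linarith [hp₂.2]⟩
    have hM : 0 ≤ M := (abs_nonneg _).trans (hu.abs_apply_le t ⟨by linarith [ht'.1], ht.2⟩ _ hmem)
    have hK : 0 ≤ max (2 * lipschitzConst n s (δ / 2)) (2 / δ) :=
      le_max_of_le_right (by positivity)
    exact norm_diffQuot_le (f := fun x => u t (x, p.2)) (mul_nonneg hK hM)
      (hu.abs_sub_le hs hS hδ ht' hp.1 hp₂)

end IsBoundedCylinderSolution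

lemma exists_diffQuotBound (n : ℕ) (hs : s ∈ Ioo (0 : ℝ) 1) (m : ℕ) (hδ : 0 < δ) :
    ∃ C, ∀ {R S M : ℝ} {u : ℝ → En n × ℝ → ℝ}, S ≤ 1 →
      IsBoundedCylinderSolution (1 - 2 * s) R S M u → ∀ t ∈ Icc (-S + δ) 0, ∀ y ∈ Icc 0 (S - δ),
        DiffQuotBound m (C * M) (R - δ) (fun x => u t (x, y)) := by
  induction m generalizing δ with
  | zero =>
    refine ⟨1, fun {R S M u} _ hu t ht y hy x hx => ?_⟩
    rw [one_mul]
    exact hu.abs_apply_le t ⟨by linarith [ht.1], ht.2⟩ (x, y)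
      ⟨by linarith, hy.1, by linarith [hy.2]⟩
  | succ m ih =>
    obtain ⟨C, hC⟩ := ih (half_pos hδ)
    refine ⟨C * max (2 * lipschitzConst n s (δ / 2 / 2)) (2 / (δ / 2)),
      fun {R S M u} hS hu t ht y hy v => ?_⟩
    have h := hC (by linarith) (hu.diffQuot hs hS (half_pos hδ) v) t
      ⟨by linarith [ht.1], ht.2⟩ y ⟨hy.1, by linarith [hy.2]⟩
    exact h.mono (mul_assoc _ _ _).ge (by linarith)

end HigherOrder

section NormalDerivative

lemma exists_rpow_mul_deriv_eq {f f' : ℝ → ℝ} {a l : ℝ} (ha : a < 1) (hl : 0 < l)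
    (hf : ∀ y ∈ Icc (l / 2) l, HasDerivAt f (f' y) y) :
    ∃ c ∈ Ioo 0 l,
      c ^ a * f' c = (1 - a) * (f l - f (l / 2)) / (l ^ (1 - a) - (l / 2) ^ (1 - a)) := by
  have hpow : ∀ y ∈ Icc (l / 2) l, HasDerivAt (fun y : ℝ => y ^ (1 - a)) ((1 - a) * y ^ (-a)) y :=
    fun y hy => by
      simpa using Real.hasDerivAt_rpow_const (p := 1 - a) (.inl (show y ≠ 0 by linarith [hy.1]))
  obtain ⟨c, hc, h⟩ := exists_ratio_hasDerivAt_eq_ratio_slope f f' (half_lt_self hl)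
    (fun y hy => (hf y hy).continuousAt.continuousWithinAt)
    (fun y hy => hf y (Ioo_subset_Icc_self hy)) _ _
    (fun y hy => (hpow y hy).continuousAt.continuousWithinAt)
    (fun y hy => hpow y (Ioo_subset_Icc_self hy))
  have hc₀ : 0 < c := (half_pos hl).trans hc.1
  have hden : (l / 2) ^ (1 - a) < l ^ (1 - a) :=
    Real.rpow_lt_rpow (half_pos hl).le (half_lt_self hl) (sub_pos.2 ha)
  refine ⟨c, ⟨hc₀, hc.2⟩, (eq_div_iff (sub_pos.2 hden).ne').2 ?_⟩
  rw [mul_assoc, mul_comm (f' c), h, Real.rpow_neg hc₀.le]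
  field_simp

lemma abs_sub_le_of_hasDerivAt_rpow_mul {Φ D : ℝ → ℝ} {a y c K : ℝ} (ha : -1 < a) (hy : 0 < y)
    (hyc : y < c) (hΦ : ∀ z ∈ Icc y c, HasDerivAt Φ (z ^ a * D z) z)
    (hD : ∀ z ∈ Icc y c, |D z| ≤ K) : |Φ c - Φ y| ≤ K * (c ^ (1 + a) / (1 + a)) := by
  have ha' : 0 < 1 + a := by linarith
  have hpow : ∀ z ∈ Icc y c, HasDerivAt (fun z : ℝ => z ^ (1 + a)) ((1 + a) * z ^ a) z :=
    fun z hz => by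
      simpa using Real.hasDerivAt_rpow_const (p := 1 + a) (.inl (hy.trans_le hz.1).ne')
  obtain ⟨ξ, hξ, h⟩ := exists_ratio_hasDerivAt_eq_ratio_slope Φ _ hyc
    (fun z hz => (hΦ z hz).continuousAt.continuousWithinAt)
    (fun z hz => hΦ z (Ioo_subset_Icc_self hz)) _ _
    (fun z hz => (hpow z hz).continuousAt.continuousWithinAt)
    (fun z hz => hpow z (Ioo_subset_Icc_self hz))
  have hξa : 0 < ξ ^ a := Real.rpow_pos_of_pos (hy.trans hξ.1) a
  have hinc : y ^ (1 + a) ≤ c ^ (1 + a) := Real.rpow_le_rpow hy.le hyc.le ha'.le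
  have hΦ_eq : Φ c - Φ y = D ξ * ((c ^ (1 + a) - y ^ (1 + a)) / (1 + a)) := by
    field_simp
    refine mul_right_cancel₀ hξa.ne' ?_
    linear_combination -h
  rw [hΦ_eq, abs_mul, abs_of_nonneg (div_nonneg (sub_nonneg.2 hinc) ha'.le)]
  gcongr
  · exact (abs_nonneg _).trans (hD ξ (Ioo_subset_Icc_self hξ))
  · exact hD ξ (Ioo_subset_Icc_self hξ)
  · linarith [Real.rpow_pos_of_pos hy (1 + a)]

/-- The bound on `lim_{y → 0⁺} y^a f'(y)` in terms of bounds `M` for `|f|` and `K` for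
`|y^{-a} (y^a f')'|` on `(0, l]`. -/
def normalDerivBound (a l M K : ℝ) : ℝ :=
  (1 - a) * (M + M) / (l ^ (1 - a) - (l / 2) ^ (1 - a)) + K * (l ^ (1 + a) / (1 + a))

lemma abs_le_normalDerivBound {f f' D : ℝ → ℝ} {a l M K L : ℝ} (ha : a ∈ Ioo (-1) 1) (hl : 0 < l)
    (hf : ∀ y ∈ Ioc 0 l, HasDerivAt f (f' y) y)
    (hf' : ∀ y ∈ Ioc 0 l, HasDerivAt (fun y => y ^ a * f' y) (y ^ a * D y) y)
    (hM : ∀ y ∈ Ioc 0 l, |f y| ≤ M) (hK : ∀ y ∈ Ioc 0 l, |D y| ≤ K)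
    (hL : Tendsto (fun y => y ^ a * f' y) (𝓝[>] 0) (𝓝 L)) : |L| ≤ normalDerivBound a l M K := by
  obtain ⟨c, hc, hceq⟩ := exists_rpow_mul_deriv_eq ha.2 hl
    fun y hy => hf y ⟨(half_pos hl).trans_le hy.1, hy.2⟩
  have hK₀ : 0 ≤ K := (abs_nonneg _).trans (hK l ⟨hl, le_rfl⟩)
  have hden : 0 < l ^ (1 - a) - (l / 2) ^ (1 - a) := sub_pos.2 <|
    Real.rpow_lt_rpow (half_pos hl).le (half_lt_self hl) (sub_pos.2 ha.2)
  have ha₁ : 0 < 1 - a := sub_pos.2 ha.2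
  have ha₂ : 0 < 1 + a := by linarith [ha.1]
  have hc_le : |c ^ a * f' c| ≤ (1 - a) * (M + M) / (l ^ (1 - a) - (l / 2) ^ (1 - a)) := by
    rw [hceq, abs_div, abs_of_pos hden, abs_mul, abs_of_pos ha₁]
    gcongr
    exact (abs_sub _ _).trans
      (add_le_add (hM l ⟨hl, le_rfl⟩) (hM _ ⟨half_pos hl, (half_lt_self hl).le⟩))
  refine le_of_tendsto hL.abs ?_
  filter_upwards [Ioo_mem_nhdsGT hc.1] with y hy
  have hsub : ∀ z ∈ Icc y c, z ∈ Ioc 0 l := fun z hz => ⟨hy.1.trans_le hz.1, hz.2.trans hc.2.le⟩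
  have hvar := abs_sub_le_of_hasDerivAt_rpow_mul ha.1 hy.1 hy.2 (fun z hz => hf' z (hsub z hz))
    fun z hz => hK z (hsub z hz)
  have hvar_l : K * (c ^ (1 + a) / (1 + a)) ≤ K * (l ^ (1 + a) / (1 + a)) := by
    gcongr
    exacts [hc.1.le, hc.2.le]
  have htri := abs_sub_abs_le_abs_sub (y ^ a * f' y) (c ^ a * f' c)
  rw [abs_sub_comm] at htri
  rw [normalDerivBound]
  linarith

end NormalDerivative

section TimeRegularity

variable {n : ℕ} {a s y δ : ℝ} {x : En n} {f : En n × ℝ → ℝ}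

lemma IsAHarmonicOn.hasDerivAt_rpow_mul_vertical {Ω : Set (En n × ℝ)} (hf : IsAHarmonicOn a f Ω)
    (hΩ : IsOpen Ω) (hp : (x, y) ∈ Ω) (hy : 0 < y) :
    HasDerivAt (fun y => y ^ a * fderiv ℝ f (x, y) (0, 1))
      (y ^ a * -∑ i : Fin n, D2 f (x, y) (EuclideanSpace.single i 1, 0)) y := by
  have hvert : HasDerivAt (fun y => fderiv ℝ f (x, y) (0, 1)) (D2 f (x, y) (0, 1)) y :=
    (differentiableAt_fderiv_apply (hf.contDiffAt hΩ hp) (0, 1)).hasFDerivAt.comp_hasDerivAt y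
      ((hasDerivAt_const y x).prodMk (hasDerivAt_id y))
  refine ((Real.hasDerivAt_rpow_const (.inl hy.ne')).mul hvert).congr_deriv ?_
  have heq := hf.2 _ hp
  rw [lap] at heq
  rw [Real.rpow_sub_one hy.ne']
  linear_combination y ^ a * heq

lemma D2_horizontal_eq_iteratedFDeriv (hf : ContDiffAt ℝ 2 f (x, y)) (v : En n) :
    D2 f (x, y) (v, 0) = iteratedFDeriv ℝ 2 (fun z => f (z, y)) x ![v, v] := by
  have hslice : ∀ z : En n, HasFDerivAt (fun z : En n => (z, y)) (.inl ℝ (En n) ℝ) z :=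
    fun z => hasFDerivAt_prodMk_left z y
  have hfderiv : fderiv ℝ (fun z => f (z, y)) =ᶠ[𝓝 x]
      fun z => (fderiv ℝ f (z, y)).comp (.inl ℝ (En n) ℝ) := by
    filter_upwards [(hslice x).continuousAt.eventually (hf.eventually (by simp))] with z hz
    exact ((hz.differentiableAt two_ne_zero).hasFDerivAt.comp z (hslice z)).fderiv
  have hsecond : HasFDerivAt (fun z : En n => fderiv ℝ f (z, y))
      ((fderiv ℝ (fderiv ℝ f) (x, y)).comp (.inl ℝ (En n) ℝ)) x :=
    ((hf.fderiv_right (m := 1) (by norm_num)).differentiableAt one_ne_zero).hasFDerivAt.comp x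
      (hslice x)
  rw [iteratedFDeriv_two_apply, hfderiv.fderiv_eq,
    (hsecond.clm_comp (hasFDerivAt_const _ x)).fderiv, D2_eq_fderiv_fderiv hf]
  simp

lemma abs_sum_D2_horizontal_le {K : ℕ → ℝ} {r : ℝ} (hf : ContDiffAt ℝ 2 f (x, y))
    (hK : ∀ m, DiffQuotBound m (K m) r (fun z => f (z, y))) (hx : ‖x‖ < r) :
    |∑ i : Fin n, D2 f (x, y) (EuclideanSpace.single i 1, 0)| ≤ n * K 2 := by
  have hterm : ∀ i : Fin n, |D2 f (x, y) (EuclideanSpace.single i 1, 0)| ≤ K 2 := fun i => by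
    rw [D2_horizontal_eq_iteratedFDeriv hf]
    refine ((iteratedFDeriv ℝ 2 (fun z => f (z, y)) x).le_opNorm _).trans ?_
    simpa [Fin.prod_univ_two] using DiffQuotBound.norm_iteratedFDeriv_le hK 2 hx
  calc |∑ i : Fin n, D2 f (x, y) (EuclideanSpace.single i 1, 0)|
      ≤ ∑ i : Fin n, |D2 f (x, y) (EuclideanSpace.single i 1, 0)| := Finset.abs_sum_le_sum_abs _ _
    _ ≤ ∑ _i : Fin n, K 2 := Finset.sum_le_sum fun i _ => hterm i
    _ = n * K 2 := by simp

lemma exists_abs_normalDeriv_le (n : ℕ) (hs : s ∈ Ioo (0 : ℝ) 1) (hδ : 0 < δ) :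
    ∃ C, ∀ {R S M : ℝ} {u : ℝ → En n × ℝ → ℝ}, S ≤ 1 →
      IsBoundedCylinderSolution (1 - 2 * s) R S M u → ∀ t ∈ Icc (-S + δ) 0, ∀ x : En n,
        ‖x‖ < R - δ → ∀ L, NormalDerivLimit (1 - 2 * s) (u t) x L → |L| ≤ C * M := by
  choose C hC using fun m => exists_diffQuotBound n hs m (half_pos hδ)
  refine ⟨normalDerivBound (1 - 2 * s) (δ / 2) 1 (n * C 2),
    fun {R S M u} hS hu t ht x hx L hL => ?_⟩
  have htS : t ∈ Icc (-S) 0 := ⟨by linarith [ht.1], ht.2⟩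
  have hmem : ∀ y ∈ Ioc 0 (δ / 2), ((x, y) : En n × ℝ) ∈ halfCylinder n R S := fun y hy =>
    ⟨by linarith, hy.1, by linarith [hy.2, ht.1, ht.2]⟩
  have hopen := isOpen_halfCylinder (n := n) R S
  have hharm := hu.aHarmonic t htS
  have hbound := abs_le_normalDerivBound (M := M) (K := n * (C 2 * M))
    ⟨by linarith [hs.2], by linarith [hs.1]⟩ (half_pos hδ)
    (fun y hy => hu.hasDerivAt_vertical htS (hmem y hy).1 (hmem y hy).2)
    (fun y hy => hharm.hasDerivAt_rpow_mul_vertical hopen (hmem y hy) hy.1)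
    (fun y hy => hu.abs_apply_le t htS (x, y)
      (halfCylinder_subset_halfCylinderWithBase R S (hmem y hy)))
    (fun y hy => by
      rw [abs_neg]
      exact abs_sum_D2_horizontal_le (K := fun m => C m * M) (hharm.contDiffAt hopen (hmem y hy))
        (fun m => hC m hS hu t ⟨by linarith [ht.1], ht.2⟩ y
          ⟨hy.1.le, by linarith [hy.2, ht.1, ht.2]⟩) (by linarith)) hL
  refine hbound.trans_eq ?_
  simp only [normalDerivBound]
  ring

lemma exists_diffQuotBound_timeSlope (n : ℕ) (hs : s ∈ Ioo (0 : ℝ) 1) (m : ℕ) (hδ : 0 < δ) :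
    ∃ C, ∀ {R S M : ℝ} {u : ℝ → En n × ℝ → ℝ}, S ≤ 1 →
      IsBoundedCylinderSolution (1 - 2 * s) R S M u →
      ∀ t ∈ Icc (-S + δ) 0, ∀ τ ∈ Icc (-S + δ) 0, τ ≠ t →
        DiffQuotBound m (C * M) (R - δ) (fun x => (τ - t)⁻¹ • (u τ (x, 0) - u t (x, 0))) := by
  induction m generalizing δ with
  | zero =>
    obtain ⟨C, hC⟩ := exists_abs_normalDeriv_le n hs hδ
    refine ⟨C, fun {R S M u} hS hu t ht τ hτ hne x hx => ?_⟩
    have hderiv : ∀ σ ∈ Icc (-S + δ) 0, ∃ L,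
        HasDerivWithinAt (fun σ => u σ (x, 0)) L (Icc (-S + δ) 0) σ ∧ ‖L‖ ≤ C * M := fun σ hσ => by
      obtain ⟨L, hL, hlim⟩ := hu.boundary σ ⟨by linarith [hσ.1], hσ.2⟩ x (by linarith)
      exact ⟨L, hL.mono (Icc_subset_Icc_left (by linarith)), hC hS hu σ hσ x hx L hlim⟩
    choose! L hL hLC using hderiv
    rw [norm_smul, norm_inv, inv_mul_le_iff₀ (norm_pos_iff.2 (sub_ne_zero.2 hne)), mul_comm]
    exact (convex_Icc _ _).norm_image_sub_le_of_norm_hasDerivWithin_le hL hLC ht hτ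
  | succ m ih =>
    obtain ⟨C, hC⟩ := ih (half_pos hδ)
    refine ⟨C * max (2 * lipschitzConst n s (δ / 2 / 2)) (2 / (δ / 2)),
      fun {R S M u} hS hu t ht τ hτ hne v => ?_⟩
    have h := hC (by linarith) (hu.diffQuot hs hS (half_pos hδ) v) t
      ⟨by linarith [ht.1], ht.2⟩ τ ⟨by linarith [hτ.1], hτ.2⟩ hne
    convert h.mono (mul_assoc _ _ _).ge (show R - δ - ‖v‖ ≤ _ by linarith) using 1
    funext x
    simp only [diffQuot]
    module

end TimeRegularity

section InteriorEstimates

variable {n : ℕ} {a s R S r U δ : ℝ} {u : ℝ → En n × ℝ → ℝ}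

lemma exists_norm_iteratedFDeriv_le (n : ℕ) (hs : s ∈ Ioo (0 : ℝ) 1) (k : ℕ) (hδ : 0 < δ) :
    ∃ C, ∀ {R S M : ℝ} {u : ℝ → En n × ℝ → ℝ}, S ≤ 1 →
      IsBoundedCylinderSolution (1 - 2 * s) R S M u →
      ∀ t ∈ Icc (-S + δ) 0, ∀ x : En n, ‖x‖ < R - δ → ∀ y ∈ Icc 0 (S - δ),
        ContDiffAt ℝ k (fun x => u t (x, y)) x ∧
          ‖iteratedFDeriv ℝ k (fun x => u t (x, y)) x‖ ≤ C * M := by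
  choose C hC using fun m => exists_diffQuotBound n hs m hδ
  refine ⟨C k, fun {R S M u} hS hu t ht x hx y hy => ?_⟩
  have hbound : ∀ m, DiffQuotBound m (C m * M) (R - δ) (fun x => u t (x, y)) :=
    fun m => hC m hS hu t ht y hy
  exact ⟨DiffQuotBound.contDiffAt hbound k hx, DiffQuotBound.norm_iteratedFDeriv_le hbound k hx⟩

lemma exists_hasDerivWithinAt_iteratedFDeriv (n : ℕ) (hs : s ∈ Ioo (0 : ℝ) 1) (k : ℕ)
    (hδ : 0 < δ) :
    ∃ C, ∀ {R S M : ℝ} {u : ℝ → En n × ℝ → ℝ}, δ < S → S ≤ 1 →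
      IsBoundedCylinderSolution (1 - 2 * s) R S M u →
      ∀ t ∈ Icc (-S + δ) 0, ∀ x : En n, ‖x‖ < R - δ → ∃ L,
        HasDerivWithinAt (fun τ => iteratedFDeriv ℝ k (fun x => u τ (x, 0)) x) L
          (Icc (-S + δ) 0) t ∧ ‖L‖ ≤ C * M := by
  choose C hC using fun m => exists_diffQuotBound n hs m hδ
  choose C' hC' using fun m => exists_diffQuotBound_timeSlope n hs m hδ
  refine ⟨C' k, fun {R S M u} hδS hS hu t ht x hx => ?_⟩
  have hacc : AccPt t (𝓟 (Icc (-S + δ) 0)) :=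
    uniqueDiffWithinAt_iff_accPt.1 (uniqueDiffOn_Icc (by linarith) t ht)
  have hderiv : ∀ z : En n, ‖z‖ < R - δ → ∃ L,
      HasDerivWithinAt (fun τ => u τ (z, 0)) L (Icc (-S + δ) 0) t := fun z hz => by
    obtain ⟨L, hL, -⟩ := hu.boundary t ⟨by linarith [ht.1], ht.2⟩ z (by linarith)
    exact ⟨L, hL.mono (Icc_subset_Icc_left (by linarith))⟩
  choose! g hg using hderiv
  have hslope := fun τ hτ hne m => hC' m hS hu t ht τ hτ hne
  have hgbound : ∀ m, DiffQuotBound m (C' m * M) (R - δ) g := fun m =>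
    .of_hasDerivWithinAt hacc (fun τ hτ hne => hslope τ hτ hne m) hg
  exact ⟨iteratedFDeriv ℝ k g x, DiffQuotBound.hasDerivWithinAt_iteratedFDeriv
    (fun τ hτ m => hC m hS hu τ hτ 0 ⟨le_rfl, by linarith⟩) ht hslope hgbound hg k hx,
    DiffQuotBound.norm_iteratedFDeriv_le hgbound k hx⟩

lemma halfCylinderWithBase_subset_halfBallWithBase (h : R ^ 2 + S ^ 2 ≤ r ^ 2) :
    halfCylinderWithBase n R S ⊆ halfBallWithBase n r := fun _ hp =>
  ⟨(add_lt_add (pow_lt_pow_left₀ hp.1 (norm_nonneg _) two_ne_zero)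
    (pow_lt_pow_left₀ hp.2.2 hp.2.1 two_ne_zero)).trans_le h, hp.2.1⟩

lemma halfBallWithBase_subset_halfCylinderWithBase (hr : 0 ≤ r) :
    halfBallWithBase n r ⊆ halfCylinderWithBase n r r := fun p hp =>
  ⟨lt_of_pow_lt_pow_left₀ 2 hr (by linarith [hp.1, sq_nonneg p.2]), hp.2,
    lt_of_pow_lt_pow_left₀ 2 hr (by linarith [hp.1, sq_nonneg ‖p.1‖])⟩

namespace IsFracHeatSolution

lemma isCylinderSolution (hu : IsFracHeatSolution a u) (hRS : R ^ 2 + S ^ 2 ≤ 1) (hR : R ≤ 1)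
    (hS : S < 1) : IsCylinderSolution a R S u := by
  have hsub : halfCylinderWithBase n R S ⊆ halfBallWithBase n 1 :=
    halfCylinderWithBase_subset_halfBallWithBase (by linarith)
  refine ⟨hu.1.mono ?_, fun t ht => ?_, fun t ht x hx => ?_⟩
  · exact prod_mono (Icc_subset_Icc_left (by linarith)) fun p hp => ⟨(hsub hp).1.le, hp.2.1⟩
  · exact (hu.2.1 t ⟨by linarith [ht.1], ht.2⟩).mono fun p hp =>
      ⟨(hsub (halfCylinder_subset_halfCylinderWithBase R S hp)).1, hp.2.1⟩
  · obtain ⟨hdiff, hlim⟩ := hu.2.2 t ⟨by linarith [ht.1], ht.2⟩ x (hx.trans_le hR)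
    exact ⟨_, hdiff.hasDerivWithinAt.mono (Icc_subset_Ioc (by linarith) le_rfl), hlim⟩

lemma isBoundedCylinderSolution (hu : IsFracHeatSolution a u) (hRS : R ^ 2 + S ^ 2 ≤ 1)
    (hR : R ≤ 1) (hS : S < 1) (hU : ∀ t ∈ Icc (-1 : ℝ) 0, ∀ p ∈ halfBall n 1, |u t p| ≤ U) :
    IsBoundedCylinderSolution a R S U u := by
  have hcyl := hu.isCylinderSolution hRS hR hS
  refine ⟨hcyl, fun t ht p hp => ?_⟩
  have hbound : ∀ q ∈ halfCylinder n R S, |u t q| ≤ U := fun q hq =>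
    hU t ⟨by linarith [ht.1], ht.2⟩ q ⟨(halfCylinderWithBase_subset_halfBallWithBase (by linarith)
      (halfCylinder_subset_halfCylinderWithBase R S hq)).1, hq.2.1⟩
  obtain ⟨x, y⟩ := p
  obtain ⟨hx, hy : 0 ≤ y, hyS : y < S⟩ := hp
  rcases hy.eq_or_lt with rfl | hy
  · have hcont := (hcyl.continuousWithinAt_vertical hyS ht hx).mono Ioi_subset_Ici_self
    refine le_of_tendsto hcont.abs ?_
    filter_upwards [Ioo_mem_nhdsGT hyS] with y hy
    exact hbound (x, y) ⟨hx, hy⟩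
  · exact hbound (x, y) ⟨hx, hy, hyS⟩

end IsFracHeatSolution

end InteriorEstimates

theorem fractional_heat_interior_smoothness_general (n : ℕ) (s : ℝ) (hs : s ∈ Ioo (0 : ℝ) 1)
    (k : ℕ) :
    ∃ C > 0, ∀ (u : ℝ → En n × ℝ → ℝ) (U0 : ℝ),
      IsFracHeatSolution (1 - 2*s) u →
      (∀ t ∈ Icc (-1 : ℝ) 0, ∀ p ∈ halfBall n 1, |u t p| ≤ U0) →
      (∀ t ∈ Icc (-(1:ℝ)/2) 0, ∀ p ∈ halfBallWithBase n (1/2),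
        ContDiffAt ℝ k (fun x' => u t (x', p.2)) p.1 ∧
        ‖iteratedFDeriv ℝ k (fun x' => u t (x', p.2)) p.1‖ ≤ C * U0) ∧
      (∀ x ∈ flatBall n (1/2), ∀ t ∈ Icc (-(1:ℝ)/2) 0,
        DifferentiableWithinAt ℝ
          (fun τ => iteratedFDeriv ℝ k (fun x' => u τ (x', 0)) x) (Icc (-(1:ℝ)/2) 0) t ∧
        ‖derivWithin (fun τ => iteratedFDeriv ℝ k (fun x' => u τ (x', 0)) x)
            (Icc (-(1:ℝ)/2) 0) t‖ ≤ C * U0) := by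
  obtain ⟨C, hC⟩ := exists_norm_iteratedFDeriv_le n hs k (δ := 1 / 5) (by norm_num)
  obtain ⟨C', hC'⟩ := exists_hasDerivWithinAt_iteratedFDeriv n hs k (δ := 1 / 5) (by norm_num)
  refine ⟨max 1 (max C C'), by positivity, fun u U0 hu hub => ?_⟩
  have hU0 : 0 ≤ U0 :=
    (abs_nonneg _).trans (hub 0 (by norm_num) (0, 1 / 2) (by norm_num [halfBall]))
  have hcyl : IsBoundedCylinderSolution (1 - 2 * s) (7 / 10) (7 / 10) U0 u :=
    hu.isBoundedCylinderSolution (by norm_num) (by norm_num) (by norm_num) hub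
  have hI : -(1 : ℝ) / 2 = -(7 / 10) + 1 / 5 := by norm_num
  rw [hI]
  constructor
  · intro t ht p hp
    obtain ⟨hx, hy, hy'⟩ := halfBallWithBase_subset_halfCylinderWithBase (by norm_num) hp
    obtain ⟨hsmooth, hnorm⟩ :=
      hC (by norm_num) hcyl t ht p.1 (by linarith) p.2 ⟨hy, by linarith⟩
    refine ⟨hsmooth, hnorm.trans (mul_le_mul_of_nonneg_right ?_ hU0)⟩
    exact (le_max_left C C').trans (le_max_right _ _)
  · intro x (hx : ‖x‖ < 1 / 2) t ht
    obtain ⟨L, hL, hnorm⟩ := hC' (by norm_num) (by norm_num) hcyl t ht x (by linarith)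
    have hud := uniqueDiffOn_Icc (show -(7 / 10 : ℝ) + 1 / 5 < 0 by norm_num) t ht
    refine ⟨hL.differentiableWithinAt, ?_⟩
    rw [hL.derivWithin hud]
    refine hnorm.trans (mul_le_mul_of_nonneg_right ?_ hU0)
    exact (le_max_right C C').trans (le_max_right _ _)

/-- **Interior smoothness for the fractional heat equation** (Proposition 4.1): bounded
solutions of the localized fractional heat equation are `C^∞` in `x` in the interior, with
estimates on all spatial derivatives and on the time derivative of each spatial derivative
on `{y = 0}`, all controlled by the `L^∞` norm of `u`. -/
theorem fractional_heat_interior_smoothness (n : ℕ) (hn : 1 ≤ n) (s : ℝ)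
    (hs : s ∈ Ioo (0 : ℝ) (1/2)) (k : ℕ) (hk : 1 ≤ k) :
    ∃ C > 0, ∀ (u : ℝ → En n × ℝ → ℝ) (U0 : ℝ), 0 ≤ U0 →
      IsFracHeatSolution (1 - 2*s) u →
      (∀ t ∈ Icc (-1 : ℝ) 0, ∀ p ∈ halfBall n 1, |u t p| ≤ U0) →
      (∀ t ∈ Icc (-(1:ℝ)/2) 0, ∀ p ∈ halfBallWithBase n (1/2),
        ContDiffAt ℝ k (fun x' => u t (x', p.2)) p.1 ∧
        ‖iteratedFDeriv ℝ k (fun x' => u t (x', p.2)) p.1‖ ≤ C * U0) ∧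
      (∀ x ∈ flatBall n (1/2), ∀ t ∈ Icc (-(1:ℝ)/2) 0,
        DifferentiableWithinAt ℝ
          (fun τ => iteratedFDeriv ℝ k (fun x' => u τ (x', 0)) x) (Icc (-(1:ℝ)/2) 0) t ∧
        ‖derivWithin (fun τ => iteratedFDeriv ℝ k (fun x' => u τ (x', 0)) x)
            (Icc (-(1:ℝ)/2) 0) t‖ ≤ C * U0) := by
  obtain ⟨C, hC, h⟩ := fractional_heat_interior_smoothness_general n s ⟨hs.1, by linarith [hs.2]⟩ k
  exact ⟨C, hC, fun u U0 _ hu hbound => h u U0 hu hbound⟩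

end
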